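/- arXiv:1102.4662 — 6 statements merged into one kernel-verified Lean document; each statement's English description precedes it below -/
import Mathlib

section
/- Let D_n = n^{n/2} · 2^{n(1-n)/2} · ∏_{1 ≤ k ≤ n/2} (cot(πk/(2n)))^{n-2k} for integers n ≥ 3, where the product runs over all integers k with 1 ≤ k ≤ n/2. Then lim_{n→∞} (ln D_n)/n² = 7ζ(3)/(2π²) - (ln 2)/2. -/
/-!
After taking logarithms and dividing by `n²`, the two prefactors contribute
`log n / (2n) + (1 - n) log 2 / (2n) → -(log 2) / 2`. What remains is the limit of
`n⁻² ∑_{k ≤ n/2} (n - 2k) log (cot (πk/(2n)))`.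

Since `log (cot (πa/2)) = ∫_a^{1/2} π / sin (πx) dx` (`log_cot_eq_integral`), exchanging the finite
sum with the integral turns this into `∫_0^{1/2} w_n(x) π / sin (πx) dx`, where
`w_n(x) = n⁻² ∑_{k ≤ n x} (n - 2k)` is a step function that tends to `x - x²` and satisfies
`0 ≤ w_n(x) ≤ x` (`sum_log_cot_eq_integral`). As `sin (πx) ≥ 2x` on `[0, 1/2]`, the integrand is
bounded by `π / 2`, and dominated convergence gives the limit
`∫_0^{1/2} (x - x²) π / sin (πx) dx` (`tendsto_sum_log_cot`).

To evaluate this integral (`integral_parabola_div_sin`), expand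
`x - x² = (8/π³) ∑_m sin ((2m+1)πx) / (2m+1)³`. The quotient `sin ((2m+1)πx) / sin (πx)` is a
Dirichlet kernel, bounded by `2m + 1` and of integral `1/2` over `[0, 1/2]`. Termwise integration
yields `(4/π²) ∑_m 1/(2m+1)³ = (4/π²) (7/8) ζ(3)`.
-/

open scoped Real

/-- Deleting the even-indexed terms of a convergent series deletes their sum. -/
lemma hasSum_odd_of_hasSum_even {f : ℕ → ℝ} {s e : ℝ} (hf : HasSum f s)
    (he : HasSum (fun k => f (2 * k)) e) : HasSum (fun k => f (2 * k + 1)) (s - e) := by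
  have ho : Summable (fun k => f (2 * k + 1)) :=
    hf.summable.comp_injective (i := fun k : ℕ => 2 * k + 1) (fun a b h => by simpa using h)
  have h := (he.even_add_odd ho.hasSum).unique hf
  have h' : s - e = ∑' k, f (2 * k + 1) := by linarith
  rw [h']
  exact ho.hasSum

lemma hasSum_zeta_three : HasSum (fun n : ℕ => 1 / (n : ℝ) ^ 3) (riemannZeta 3).re := by
  have hs : Summable (fun n : ℕ => 1 / (n : ℝ) ^ 3) :=
    Real.summable_one_div_nat_pow.mpr (by norm_num)
  have h := zeta_nat_eq_tsum_of_gt_one (k := 3) (by norm_num)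
  have h' : riemannZeta 3 = ((∑' n : ℕ, 1 / (n : ℝ) ^ 3 : ℝ) : ℂ) := by
    push_cast
    simpa using h
  rw [h', Complex.ofReal_re]
  exact hs.hasSum

lemma hasSum_odd_inv_cube :
    HasSum (fun m : ℕ => 1 / (2 * (m : ℝ) + 1) ^ 3) (7 / 8 * (riemannZeta 3).re) := by
  have he : HasSum (fun k : ℕ => 1 / ((2 * k : ℕ) : ℝ) ^ 3) (1 / 8 * (riemannZeta 3).re) := by
    convert! hasSum_zeta_three.mul_left (1 / 8) using 2 with k
    push_cast
    rw [mul_pow, ← one_div_mul_one_div]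
    norm_num
  convert! hasSum_odd_of_hasSum_even hasSum_zeta_three he using 1
  · funext m; push_cast; rfl
  · ring

lemma hasSum_sin_div_cube {y : ℝ} (hy : y ∈ Set.Icc (0 : ℝ) 1) :
    HasSum (fun n : ℕ => 1 / (n : ℝ) ^ 3 * Real.sin (2 * π * n * y))
      (2 * π ^ 3 / 3 * (y ^ 3 - 3 / 2 * y ^ 2 + y / 2)) := by
  convert! hasSum_one_div_nat_pow_mul_sin (k := 1) one_ne_zero hy using 1
  have hB : (Polynomial.map (algebraMap ℚ ℝ) (Polynomial.bernoulli (2 * 1 + 1))).eval y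
      = y ^ 3 - 3 / 2 * y ^ 2 + y / 2 := by
    simp only [Polynomial.bernoulli, Finset.sum_range_succ, Polynomial.map_add,
      Polynomial.eval_add, Polynomial.map_monomial, Polynomial.eval_monomial,
      Finset.sum_range_zero, Polynomial.map_zero, Polynomial.eval_zero, bernoulli_one]
    rw [bernoulli_eq_bernoulli'_of_ne_one zero_ne_one, bernoulli'_zero,
      bernoulli_eq_bernoulli'_of_ne_one (by decide : 2 ≠ 1), bernoulli'_two,
      bernoulli_eq_bernoulli'_of_ne_one (by decide : 3 ≠ 1), bernoulli'_three]
    norm_num [Nat.choose]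
    ring
  have h6 : (((2 * 1 + 1).factorial : ℕ) : ℝ) = 6 := by norm_num [Nat.factorial]
  rw [hB, h6]
  ring

/-- The sine series of the parabola `x - x²`. It is the odd part of the Fourier series of the
third Bernoulli polynomial at `x / 2`; the even part is that series at `x`, divided by `8`. -/
lemma hasSum_odd_sin_div_cube {x : ℝ} (hx : x ∈ Set.Icc (0 : ℝ) 1) :
    HasSum (fun m : ℕ => 1 / (2 * (m : ℝ) + 1) ^ 3 * Real.sin ((2 * m + 1) * (π * x)))
      (π ^ 3 / 8 * (x - x ^ 2)) := by
  have hf := hasSum_sin_div_cube (y := x / 2) ⟨by linarith [hx.1], by linarith [hx.2]⟩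
  have he : HasSum (fun k : ℕ => 1 / ((2 * k : ℕ) : ℝ) ^ 3 *
      Real.sin (2 * π * ((2 * k : ℕ) : ℝ) * (x / 2)))
      (1 / 8 * (2 * π ^ 3 / 3 * (x ^ 3 - 3 / 2 * x ^ 2 + x / 2))) := by
    convert! (hasSum_sin_div_cube hx).mul_left (1 / 8) using 2 with k
    push_cast
    rw [mul_pow, ← one_div_mul_one_div,
      show 2 * π * (2 * (k : ℝ)) * (x / 2) = 2 * π * k * x by ring]
    ring
  convert! hasSum_odd_of_hasSum_even hf he using 1
  · funext m
    push_cast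
    rw [show 2 * π * (2 * (m : ℝ) + 1) * (x / 2) = (2 * m + 1) * (π * x) by ring]
  · ring

/-- The Dirichlet kernel `sin ((2m+1)πx) / sin (πx)`, written as the cosine polynomial
`1 + 2 ∑_{k=1}^m cos (2πkx)`, so that it is also defined where `sin (πx) = 0`. -/
noncomputable def dirichletKer (m : ℕ) (x : ℝ) : ℝ :=
  1 + ∑ i ∈ Finset.range m, 2 * Real.cos (2 * π * (i + 1) * x)

lemma dirichletKer_mul_sin (m : ℕ) (x : ℝ) :
    dirichletKer m x * Real.sin (π * x) = Real.sin ((2 * m + 1) * (π * x)) := by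
  induction m with
  | zero => simp [dirichletKer]
  | succ m ih =>
    have h1 : dirichletKer (m + 1) x = dirichletKer m x + 2 * Real.cos (2 * π * (m + 1) * x) := by
      simp only [dirichletKer, Finset.sum_range_succ]; ring
    have h2 : Real.sin ((2 * ((m + 1 : ℕ) : ℝ) + 1) * (π * x)) =
        Real.sin (2 * π * (m + 1) * x + π * x) := by push_cast; ring_nf
    have h3 : Real.sin ((2 * m + 1) * (π * x)) = Real.sin (2 * π * (m + 1) * x - π * x) := by
      ring_nf
    rw [h1, add_mul, ih, h2, h3, Real.sin_add, Real.sin_sub]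
    ring

lemma continuous_dirichletKer (m : ℕ) : Continuous (dirichletKer m) := by
  unfold dirichletKer
  fun_prop

lemma abs_dirichletKer_le (m : ℕ) (x : ℝ) : |dirichletKer m x| ≤ 2 * m + 1 := by
  have h : |∑ i ∈ Finset.range m, 2 * Real.cos (2 * π * (i + 1) * x)|
      ≤ ∑ i ∈ Finset.range m, (2 : ℝ) := by
    refine (Finset.abs_sum_le_sum_abs _ _).trans (Finset.sum_le_sum fun i _ => ?_)
    rw [abs_mul, abs_two]
    linarith [Real.abs_cos_le_one (2 * π * (i + 1) * x)]
  simp only [Finset.sum_const, Finset.card_range, nsmul_eq_mul] at h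
  have h2 := abs_add_le 1 (∑ i ∈ Finset.range m, 2 * Real.cos (2 * π * (i + 1) * x))
  rw [abs_one] at h2
  unfold dirichletKer
  linarith

lemma integral_dirichletKer (m : ℕ) : ∫ x in (0 : ℝ)..1 / 2, dirichletKer m x = 1 / 2 := by
  have hcos : ∀ i : ℕ, ∫ x in (0 : ℝ)..1 / 2, 2 * Real.cos (2 * π * (i + 1) * x) = 0 := by
    intro i
    have hc : 2 * π * ((i : ℝ) + 1) ≠ 0 := by positivity
    rw [intervalIntegral.integral_const_mul, intervalIntegral.integral_comp_mul_left _ hc, integral_cos,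
      show 2 * π * ((i : ℝ) + 1) * (1 / 2) = ((i + 1 : ℕ) : ℝ) * π by push_cast; ring,
      Real.sin_nat_mul_pi]
    simp
  unfold dirichletKer
  rw [intervalIntegral.integral_add (by simp)
    (Continuous.intervalIntegrable (by fun_prop) _ _),
    intervalIntegral.integral_finsetSum
      (fun i _ => Continuous.intervalIntegrable (by fun_prop) _ _)]
  rw [Finset.sum_eq_zero fun i _ => hcos i]
  simp

/-- The kernel `π / sin (πx)` is minus the derivative of `log (cot (πx/2))`, which vanishes at
`x = 1/2`. -/
lemma log_cot_eq_integral {a : ℝ} (ha : 0 < a) (ha' : a ≤ 1 / 2) :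
    Real.log (Real.cos (π * a / 2) / Real.sin (π * a / 2)) =
      ∫ x in a..1 / 2, π / Real.sin (π * x) := by
  have hpi := Real.pi_pos
  have hpos : ∀ x ∈ Set.uIcc a (1 / 2), 0 < Real.sin (π * x / 2) ∧ 0 < Real.cos (π * x / 2) := by
    intro x hx
    rw [Set.uIcc_of_le ha'] at hx
    have h0 : 0 < x := ha.trans_le hx.1
    have h1 : π * x ≤ π * (1 / 2) := by gcongr; exact hx.2
    exact ⟨Real.sin_pos_of_pos_of_lt_pi (by positivity) (by linarith),
      Real.cos_pos_of_mem_Ioo ⟨by linarith [mul_pos hpi h0], by linarith⟩⟩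
  have hsin : ∀ x, Real.sin (π * x) = 2 * Real.sin (π * x / 2) * Real.cos (π * x / 2) := by
    intro x
    rw [← Real.sin_two_mul]; ring_nf
  have hd : ∀ x ∈ Set.uIcc a (1 / 2), HasDerivAt
      (fun x => Real.log (Real.sin (π * x / 2)) - Real.log (Real.cos (π * x / 2)))
      (π / Real.sin (π * x)) x := by
    intro x hx
    obtain ⟨hs, hc⟩ := hpos x hx
    have hl : HasDerivAt (fun x : ℝ => π * x / 2) (π / 2) x := by
      simpa using ((hasDerivAt_id x).const_mul π).div_const 2
    convert! (hl.sin.log hs.ne').sub (hl.cos.log hc.ne') using 1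
    rw [hsin]
    field_simp
    linarith [Real.sin_sq_add_cos_sq (π * x / 2)]
  have hcont : ContinuousOn (fun x => π / Real.sin (π * x)) (Set.uIcc a (1 / 2)) := by
    refine ContinuousOn.div (by fun_prop) (by fun_prop) fun x hx => ?_
    obtain ⟨hs, hc⟩ := hpos x hx
    rw [hsin]
    positivity
  rw [intervalIntegral.integral_eq_sub_of_hasDerivAt hd hcont.intervalIntegrable]
  obtain ⟨hs, hc⟩ := hpos a Set.left_mem_uIcc
  rw [Real.log_div hc.ne' hs.ne', show π * (1 / 2) / 2 = π / 4 by ring, Real.sin_pi_div_four,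
    Real.cos_pi_div_four]
  ring

lemma two_mul_le_sin_pi_mul {x : ℝ} (hx : 0 ≤ x) (hx' : x ≤ 1 / 2) :
    2 * x ≤ Real.sin (π * x) := by
  have hpi := Real.pi_pos
  have h := Real.mul_le_sin (x := π * x) (by positivity)
    (by have : π * x ≤ π * (1 / 2) := by gcongr
        linarith)
  calc 2 * x = 2 / π * (π * x) := by field_simp
    _ ≤ _ := h

lemma integral_parabola_div_sin :
    ∫ x in (0 : ℝ)..1 / 2, (x - x ^ 2) * (π / Real.sin (π * x)) =
      7 * (riemannZeta 3).re / (2 * π ^ 2) := by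
  have hpi := Real.pi_pos
  have h1 : HasSum (fun m : ℕ => ∫ x in (0 : ℝ)..1 / 2,
      8 / π ^ 2 * (1 / (2 * (m : ℝ) + 1) ^ 3) * dirichletKer m x)
      (∫ x in (0 : ℝ)..1 / 2, (x - x ^ 2) * (π / Real.sin (π * x))) := by
    have hsum : Summable (fun m : ℕ => 8 / π ^ 2 * (1 / (2 * (m : ℝ) + 1) ^ 2)) := by
      refine Summable.mul_left _ ?_
      have h2 : Summable (fun n : ℕ => 1 / (n : ℝ) ^ 2) :=
        Real.summable_one_div_nat_pow.mpr (by norm_num)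
      have h3 := h2.comp_injective (i := fun k : ℕ => 2 * k + 1) (fun a b h => by simpa using h)
      refine h3.congr fun m => ?_
      simp
    refine intervalIntegral.hasSum_integral_of_dominated_convergence
      (fun m _ => 8 / π ^ 2 * (1 / (2 * (m : ℝ) + 1) ^ 2)) ?_ ?_ ?_ ?_ ?_
    · intro m
      exact (((continuous_dirichletKer m).const_mul _)).aestronglyMeasurable
    · refine fun m => Filter.Eventually.of_forall fun x _ => ?_
      have hm : (0 : ℝ) < 2 * m + 1 := by positivity
      rw [Real.norm_eq_abs, abs_mul, abs_of_pos (by positivity)]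
      calc _ ≤ 8 / π ^ 2 * (1 / (2 * (m : ℝ) + 1) ^ 3) * (2 * m + 1) := by
            gcongr; exact abs_dirichletKer_le m x
        _ = _ := by field_simp
    · exact Filter.Eventually.of_forall fun x _ => hsum
    · simp
    · refine Filter.Eventually.of_forall fun x hx => ?_
      rw [Set.uIoc_of_le (by norm_num)] at hx
      have hs : 0 < Real.sin (π * x) :=
        lt_of_lt_of_le (by linarith [hx.1]) (two_mul_le_sin_pi_mul hx.1.le hx.2)
      have h := (hasSum_odd_sin_div_cube (x := x) ⟨hx.1.le, by linarith [hx.2]⟩).mul_left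
        (8 / π ^ 2 / Real.sin (π * x))
      convert! h using 1
      · funext m
        rw [← dirichletKer_mul_sin]
        field_simp
      · field_simp
  have h2 : HasSum (fun m : ℕ => ∫ x in (0 : ℝ)..1 / 2,
      8 / π ^ 2 * (1 / (2 * (m : ℝ) + 1) ^ 3) * dirichletKer m x)
      (4 / π ^ 2 * (7 / 8 * (riemannZeta 3).re)) := by
    convert! hasSum_odd_inv_cube.mul_left (4 / π ^ 2) using 2 with m
    rw [intervalIntegral.integral_const_mul, integral_dirichletKer]
    ring
  rw [h1.unique h2]
  ring

/-- The step function `n⁻² ∑_{1 ≤ k ≤ n x} (n - 2k)`, for `0 ≤ x ≤ 1/2`, that replaces `x - x²` at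
finite `n`. It is written as a sum of indicators so that it can be integrated term by term. -/
noncomputable def stepWeight (n : ℕ) (x : ℝ) : ℝ :=
  ∑ k ∈ Finset.Icc 1 (n / 2),
    (Set.Ici ((k : ℝ) / n)).indicator (fun _ => ((n - 2 * k : ℕ) : ℝ) / (n : ℝ) ^ 2) x

lemma measurable_stepWeight (n : ℕ) : Measurable (stepWeight n) := by
  unfold stepWeight
  exact Finset.measurable_fun_sum _ fun k _ => measurable_const.indicator measurableSet_Ici

/-- For `x ≤ 1/2` the sum runs over `1 ≤ k ≤ ⌊n x⌋`, since then `⌊n x⌋ ≤ n / 2`. -/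
lemma stepWeight_eq {n : ℕ} (hn : 0 < n) {x : ℝ} (hx : 0 ≤ x) (hx' : x ≤ 1 / 2) :
    stepWeight n x = (⌊x * n⌋₊ : ℝ) / n - (⌊x * n⌋₊ : ℝ) / n * ((⌊x * n⌋₊ : ℝ) / n + 1 / n) := by
  have hn' : (0 : ℝ) < n := by exact_mod_cast hn
  set K := ⌊x * n⌋₊ with hK
  have hKn : 2 * K ≤ n := by
    have h1 : (K : ℝ) ≤ x * n := Nat.floor_le (by positivity)
    have h2 : x * n ≤ 1 / 2 * n := by gcongr
    have : (2 * K : ℝ) ≤ n := by linarith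
    exact_mod_cast this
  have hset : (Finset.Icc 1 (n / 2)).filter (fun k : ℕ => (k : ℝ) / n ≤ x) = Finset.Icc 1 K := by
    ext k
    simp only [Finset.mem_filter, Finset.mem_Icc]
    rw [div_le_iff₀ hn', ← Nat.le_floor_iff (by positivity), ← hK]
    omega
  have hgauss : ∀ j : ℕ, ∑ k ∈ Finset.Icc 1 j, ((n : ℝ) - 2 * k) = n * j - j * (j + 1) := by
    intro j
    induction j with
    | zero => simp
    | succ j ih => rw [Finset.sum_Icc_succ_top (by omega), ih]; push_cast; ring
  have : stepWeight n x = (∑ k ∈ Finset.Icc 1 K, ((n : ℝ) - 2 * k)) / (n : ℝ) ^ 2 := by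
    unfold stepWeight
    simp only [Set.indicator_apply, Set.mem_Ici]
    rw [← Finset.sum_filter, hset, Finset.sum_div]
    refine Finset.sum_congr rfl fun k hk => ?_
    rw [Finset.mem_Icc] at hk
    rw [Nat.cast_sub (by omega)]
    push_cast
    rfl
  rw [this, hgauss]
  field_simp

lemma stepWeight_nonneg (n : ℕ) (x : ℝ) : 0 ≤ stepWeight n x :=
  Finset.sum_nonneg fun _ _ => Set.indicator_nonneg (fun _ _ => by positivity) _

lemma stepWeight_le {n : ℕ} (hn : 0 < n) {x : ℝ} (hx : 0 ≤ x) (hx' : x ≤ 1 / 2) :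
    stepWeight n x ≤ x := by
  have hn' : (0 : ℝ) < n := by exact_mod_cast hn
  have h : (⌊x * n⌋₊ : ℝ) / n ≤ x := (div_le_iff₀ hn').mpr (Nat.floor_le (by positivity))
  have h' : 0 ≤ (⌊x * n⌋₊ : ℝ) / n * ((⌊x * n⌋₊ : ℝ) / n + 1 / n) := by positivity
  rw [stepWeight_eq hn hx hx']
  linarith

lemma tendsto_stepWeight {x : ℝ} (hx : 0 ≤ x) (hx' : x ≤ 1 / 2) :
    Filter.Tendsto (fun n : ℕ => stepWeight n x) Filter.atTop (nhds (x - x ^ 2)) := by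
  have h : Filter.Tendsto (fun n : ℕ => (⌊x * n⌋₊ : ℝ) / n) Filter.atTop (nhds x) :=
    (tendsto_nat_floor_mul_div_atTop hx).comp tendsto_natCast_atTop_atTop
  have h1 : Filter.Tendsto (fun n : ℕ => (1 : ℝ) / n) Filter.atTop (nhds 0) :=
    tendsto_one_div_atTop_nhds_zero_nat
  have h2 := h.sub (h.mul (h.add h1))
  rw [show x - x * (x + 0) = x - x ^ 2 by ring] at h2
  refine h2.congr' ?_
  filter_upwards [Filter.eventually_gt_atTop 0] with n hn
  rw [stepWeight_eq hn hx hx']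

lemma sum_log_cot_eq_integral {n : ℕ} (hn : 0 < n) :
    (∑ k ∈ Finset.Icc 1 (n / 2), ((n - 2 * k : ℕ) : ℝ) *
        Real.log (Real.cos (π * k / (2 * n)) / Real.sin (π * k / (2 * n)))) / (n : ℝ) ^ 2 =
      ∫ x in (0 : ℝ)..1 / 2, stepWeight n x * (π / Real.sin (π * x)) := by
  have hn' : (0 : ℝ) < n := by exact_mod_cast hn
  have hpi := Real.pi_pos
  have key : ∀ k ∈ Finset.Icc 1 (n / 2), 0 < (k : ℝ) / n ∧ (k : ℝ) / n ≤ 1 / 2 := by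
    intro k hk
    rw [Finset.mem_Icc] at hk
    have h1 : (0 : ℝ) < k := by exact_mod_cast hk.1
    have h2 : (2 * k : ℝ) ≤ n := by exact_mod_cast (by omega : 2 * k ≤ n)
    exact ⟨by positivity, by rw [div_le_iff₀ hn']; linarith⟩
  have hind : ∀ (a c : ℝ) (x : ℝ),
      (Set.Ici a).indicator (fun _ => c) x * (π / Real.sin (π * x)) =
        (Set.Ici a).indicator (fun x => c * (π / Real.sin (π * x))) x := by
    intro a c x
    by_cases h : x ∈ Set.Ici a <;> simp [h]
  have hset : ∀ a : ℝ, 0 < a → Set.Ioc (0 : ℝ) (1 / 2) ∩ Set.Ici a = Set.Icc a (1 / 2) := by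
    intro a ha
    ext x
    simp only [Set.mem_inter_iff, Set.mem_Ioc, Set.mem_Ici, Set.mem_Icc]
    exact ⟨fun h => ⟨h.2, h.1.2⟩, fun h => ⟨⟨ha.trans_le h.1, h.2⟩, h.1⟩⟩
  have hint : ∀ a c : ℝ, 0 < a → MeasureTheory.IntegrableOn
      ((Set.Ici a).indicator (fun x => c * (π / Real.sin (π * x)))) (Set.Ioc 0 (1 / 2)) := by
    intro a c ha
    rw [MeasureTheory.integrableOn_indicator_iff measurableSet_Ici, Set.inter_comm, hset a ha]
    refine ContinuousOn.integrableOn_Icc ?_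
    refine continuousOn_const.mul (ContinuousOn.div (by fun_prop) (by fun_prop) fun x hx => ?_)
    have := two_mul_le_sin_pi_mul (ha.le.trans hx.1) hx.2
    linarith [hx.1]
  rw [intervalIntegral.integral_of_le (by norm_num)]
  simp only [stepWeight, Finset.sum_mul, hind]
  rw [MeasureTheory.integral_finsetSum _ (fun k hk => hint _ _ (key k hk).1), Finset.sum_div]
  refine Finset.sum_congr rfl fun k hk => ?_
  obtain ⟨h1, h2⟩ := key k hk
  rw [MeasureTheory.setIntegral_indicator measurableSet_Ici, hset _ h1,
    MeasureTheory.integral_Icc_eq_integral_Ioc, ← intervalIntegral.integral_of_le h2,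
    intervalIntegral.integral_const_mul, ← log_cot_eq_integral h1 h2,
    show π * ((k : ℝ) / n) / 2 = π * k / (2 * n) by field_simp]
  ring

lemma tendsto_sum_log_cot :
    Filter.Tendsto (fun n : ℕ => (∑ k ∈ Finset.Icc 1 (n / 2), ((n - 2 * k : ℕ) : ℝ) *
        Real.log (Real.cos (π * k / (2 * n)) / Real.sin (π * k / (2 * n)))) / (n : ℝ) ^ 2)
      Filter.atTop (nhds (7 * (riemannZeta 3).re / (2 * π ^ 2))) := by
  have hpi := Real.pi_pos
  rw [← integral_parabola_div_sin]
  have h : Filter.Tendsto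
      (fun n : ℕ => ∫ x in (0 : ℝ)..1 / 2, stepWeight n x * (π / Real.sin (π * x)))
      Filter.atTop (nhds (∫ x in (0 : ℝ)..1 / 2, (x - x ^ 2) * (π / Real.sin (π * x)))) := by
    -- `stepWeight n x ≤ x` and `2 x ≤ sin (π x)` give the constant bound `π / 2`.
    refine intervalIntegral.tendsto_integral_filter_of_dominated_convergence
      (fun _ => π / 2) ?_ ?_ (by simp) ?_
    · refine Filter.Eventually.of_forall fun n => ?_
      exact ((measurable_stepWeight n).mul (by fun_prop)).aestronglyMeasurable
    · filter_upwards [Filter.eventually_gt_atTop 0] with n hn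
      refine Filter.Eventually.of_forall fun x hx => ?_
      rw [Set.uIoc_of_le (by norm_num)] at hx
      have hs := two_mul_le_sin_pi_mul hx.1.le hx.2
      have hs' : 0 < Real.sin (π * x) := lt_of_lt_of_le (by linarith [hx.1]) hs
      have hw := stepWeight_le hn hx.1.le hx.2
      rw [Real.norm_of_nonneg (mul_nonneg (stepWeight_nonneg n x) (by positivity)), ← mul_div_assoc,
        div_le_div_iff₀ hs' two_pos]
      nlinarith
    · refine Filter.Eventually.of_forall fun x hx => ?_
      rw [Set.uIoc_of_le (by norm_num)] at hx
      exact (tendsto_stepWeight hx.1.le hx.2).mul_const _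
  refine h.congr' ?_
  filter_upwards [Filter.eventually_gt_atTop 0] with n hn
  exact (sum_log_cot_eq_integral hn).symm

lemma log_prefactor_mul_prod {n : ℕ} (hn : 0 < n) :
    Real.log ((n : ℝ) ^ ((n : ℝ) / 2) * (2 : ℝ) ^ (((n : ℝ) * (1 - (n : ℝ))) / 2) *
        ∏ k ∈ Finset.Icc 1 (n / 2),
          (Real.cos (π * k / (2 * n)) / Real.sin (π * k / (2 * n))) ^ (n - 2 * k)) / (n : ℝ) ^ 2 =
      1 / 2 * (Real.log n / n) + (1 / 2 * (1 / n) - 1 / 2) * Real.log 2 +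
      (∑ k ∈ Finset.Icc 1 (n / 2), ((n - 2 * k : ℕ) : ℝ) *
        Real.log (Real.cos (π * k / (2 * n)) / Real.sin (π * k / (2 * n)))) / (n : ℝ) ^ 2 := by
  have hn' : (0 : ℝ) < n := by exact_mod_cast hn
  have hpi := Real.pi_pos
  have hpos : ∀ k ∈ Finset.Icc 1 (n / 2),
      (Real.cos (π * k / (2 * n)) / Real.sin (π * k / (2 * n))) ^ (n - 2 * k) ≠ 0 := by
    intro k hk
    rw [Finset.mem_Icc] at hk
    have h1 : (0 : ℝ) < k := by exact_mod_cast hk.1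
    have h2 : (2 * k : ℝ) ≤ n := by exact_mod_cast (by omega : 2 * k ≤ n)
    have h3 : 0 < π * k / (2 * n) := by positivity
    have h4 : π * k / (2 * n) ≤ π / 4 := by
      rw [div_le_div_iff₀ (by positivity) (by norm_num)]
      nlinarith
    have hs := Real.sin_pos_of_pos_of_lt_pi h3 (by linarith)
    have hc := Real.cos_pos_of_mem_Ioo ⟨by linarith, by linarith⟩ (x := π * k / (2 * n))
    positivity
  rw [Real.log_mul (by positivity) (Finset.prod_ne_zero_iff.mpr hpos),
    Real.log_mul (by positivity) (by positivity), Real.log_rpow hn', Real.log_rpow two_pos,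
    Real.log_prod hpos]
  simp only [Real.log_pow]
  rw [add_div]
  congr 1
  field_simp

/-- For the value `D n` of the Atiyah determinant at the vertices of a regular `n`-gon,
`lim_{n→∞} (ln D_n)/n² = 7ζ(3)/(2π²) - (ln 2)/2`. -/
theorem atiyah_det_regular_ngon_asymptotics (D : ℕ → ℝ)
    (hD : ∀ n : ℕ, 3 ≤ n → D n =
      (n : ℝ) ^ ((n : ℝ) / 2) * (2 : ℝ) ^ (((n : ℝ) * (1 - (n : ℝ))) / 2) *
        ∏ k ∈ Finset.Icc 1 (n / 2),
          (Real.cos (Real.pi * k / (2 * n)) / Real.sin (Real.pi * k / (2 * n))) ^ (n - 2 * k)) :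
    Filter.Tendsto (fun n : ℕ => Real.log (D n) / (n : ℝ) ^ 2) Filter.atTop
      (nhds (7 * (riemannZeta 3).re / (2 * Real.pi ^ 2) - Real.log 2 / 2)) := by
  have h1 : Filter.Tendsto (fun n : ℕ => (1 : ℝ) / n) Filter.atTop (nhds 0) :=
    tendsto_one_div_atTop_nhds_zero_nat
  have h2 : Filter.Tendsto (fun n : ℕ => Real.log n / n) Filter.atTop (nhds 0) :=
    Real.isLittleO_log_id_atTop.tendsto_div_nhds_zero.comp tendsto_natCast_atTop_atTop
  have h3 := ((h2.const_mul (1 / 2)).add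
    (((h1.const_mul (1 / 2)).sub_const (1 / 2)).mul_const (Real.log 2))).add tendsto_sum_log_cot
  rw [show 1 / 2 * 0 + (1 / 2 * 0 - 1 / 2) * Real.log 2 + 7 * (riemannZeta 3).re / (2 * π ^ 2) =
    7 * (riemannZeta 3).re / (2 * π ^ 2) - Real.log 2 / 2 by ring] at h3
  refine h3.congr' ?_
  filter_upwards [Filter.eventually_ge_atTop 3] with n hn
  rw [hD n hn, log_prefactor_mul_prod (by omega)]
end

section
/- Let D_n = n^{n/2} · 2^{n(1-n)/2} · ∏_{1 ≤ k ≤ n/2} (cot(πk/(2n)))^{n-2k} for integers n ≥ 3, where the product runs over all integers k with 1 ≤ k ≤ n/2. Then D_n > 1 for all integers n ≥ 3. -/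
/-!
Pairing `k` with `n - k` in the classical identity `∏_{0 < k < n} 2 sin (πk/n) = n` gives
`(1/2) (log n - (n - 1) log 2) = ∑_{1 ≤ k ≤ n/2} log sin (πk/n)`. Hence the logarithm of the
determinant is `∑_{1 ≤ k ≤ n/2} (n log sin (πk/n) + (n - 2k) log cot (πk/(2n)))`, and it turns out
that each term is nonnegative, with equality only for `k = n/2`.

With `t = π/2 - πk/n` the `k`-th term is `n/π` times
`P t = π log cos t + 2t (log (1 + sin t) - log cos t)`, because `cot (πk/(2n)) = (1 + sin t)/cos t`.
Here `P 0 = P' 0 = 0` and `P'' t = (4 cos t + 2t sin t - π) / cos² t`, whose numerator decreases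
strictly on `[0, π/2]` (this is `t < tan t`) and vanishes at `π/2`. So `P` is strictly convex, and
positive on `(0, π/2)`.
-/

open scoped Real

/-- The numerator of `P''` is positive. -/
lemma pi_lt_four_cos_add {t : ℝ} (h0 : 0 ≤ t) (h1 : t < π / 2) :
    π < 4 * Real.cos t + 2 * t * Real.sin t := by
  have hpi := Real.pi_pos
  have key : StrictAntiOn (fun t : ℝ => 4 * Real.cos t + 2 * t * Real.sin t)
      (Set.Icc 0 (π / 2)) := by
    refine strictAntiOn_of_hasDerivWithinAt_neg (convex_Icc _ _)
      (f' := fun t => 2 * (t * Real.cos t - Real.sin t)) (by fun_prop) ?_ ?_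
    · intro x _
      have := ((Real.hasDerivAt_cos x).const_mul 4).add
        (((hasDerivAt_id x).const_mul 2).mul (Real.hasDerivAt_sin x))
      refine (this.congr_deriv ?_).hasDerivWithinAt
      simp only [id]
      ring
    · intro x hx
      rw [interior_Icc] at hx
      have hc : 0 < Real.cos x := Real.cos_pos_of_mem_Ioo ⟨by linarith [hx.1], hx.2⟩
      have h := Real.lt_tan hx.1 hx.2
      rw [Real.tan_eq_sin_div_cos, lt_div_iff₀ hc] at h
      linarith
  have h := key ⟨h0, h1.le⟩ ⟨by linarith, le_rfl⟩ h1
  simp only [Real.cos_pi_div_two, Real.sin_pi_div_two] at h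
  linarith

/-- `log (1 + sin t) - log cos t` is the inverse Gudermannian function, with derivative `sec t`. -/
lemma hasDerivAt_log_one_add_sin_sub_log_cos {t : ℝ} (hc : 0 < Real.cos t)
    (hs : 0 < 1 + Real.sin t) :
    HasDerivAt (fun t => Real.log (1 + Real.sin t) - Real.log (Real.cos t))
      (1 / Real.cos t) t := by
  refine ((((Real.hasDerivAt_sin t).const_add 1).log hs.ne').sub
    ((Real.hasDerivAt_cos t).log hc.ne')).congr_deriv ?_
  have := Real.sin_sq_add_cos_sq t
  field_simp
  linear_combination this

/-- The derivative of `P` is positive on `(0, π/2)`. -/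
lemma deriv_term_pos {t : ℝ} (h0 : 0 < t) (h1 : t < π / 2) :
    0 < -π * (Real.sin t / Real.cos t)
      + 2 * (Real.log (1 + Real.sin t) - Real.log (Real.cos t)) + 2 * (t / Real.cos t) := by
  have hpi := Real.pi_pos
  have hd : ∀ x ∈ Set.Ico 0 (π / 2), HasDerivAt (fun t => -π * (Real.sin t / Real.cos t)
      + 2 * (Real.log (1 + Real.sin t) - Real.log (Real.cos t)) + 2 * (t / Real.cos t))
      ((4 * Real.cos x + 2 * x * Real.sin x - π) / Real.cos x ^ 2) x := by
    intro x hx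
    have hc : 0 < Real.cos x := Real.cos_pos_of_mem_Ioo ⟨by linarith [hx.1], hx.2⟩
    have hs : 0 ≤ Real.sin x := Real.sin_nonneg_of_nonneg_of_le_pi hx.1 (by linarith [hx.2])
    refine (((((Real.hasDerivAt_sin x).div (Real.hasDerivAt_cos x) hc.ne').const_mul (-π)).add
      ((hasDerivAt_log_one_add_sin_sub_log_cos hc (by linarith)).const_mul 2)).add
      (((hasDerivAt_id x).div (Real.hasDerivAt_cos x) hc.ne').const_mul 2)).congr_deriv ?_
    have := Real.sin_sq_add_cos_sq x
    simp only [id]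
    field_simp
    linear_combination (-π) * this
  have key := strictMonoOn_of_hasDerivWithinAt_pos (convex_Ico 0 (π / 2))
    (fun x hx => (hd x hx).continuousAt.continuousWithinAt)
    (fun x hx => (hd x (interior_subset hx)).hasDerivWithinAt) (fun x hx => by
      have hx' := interior_subset hx
      have hc : 0 < Real.cos x := Real.cos_pos_of_mem_Ioo ⟨by linarith [hx'.1], hx'.2⟩
      have := pi_lt_four_cos_add hx'.1 hx'.2
      exact div_pos (by linarith) (by positivity))
  simpa using key ⟨le_rfl, by linarith⟩ ⟨h0.le, h1⟩ h0

/-- `P` is positive on `(0, π/2)`. -/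
lemma term_pos {t : ℝ} (h0 : 0 < t) (h1 : t < π / 2) :
    0 < π * Real.log (Real.cos t)
      + 2 * t * (Real.log (1 + Real.sin t) - Real.log (Real.cos t)) := by
  have hpi := Real.pi_pos
  have hd : ∀ x ∈ Set.Ico 0 (π / 2), HasDerivAt (fun t => π * Real.log (Real.cos t)
      + 2 * t * (Real.log (1 + Real.sin t) - Real.log (Real.cos t)))
      (-π * (Real.sin x / Real.cos x)
      + 2 * (Real.log (1 + Real.sin x) - Real.log (Real.cos x)) + 2 * (x / Real.cos x)) x := by
    intro x hx
    have hc : 0 < Real.cos x := Real.cos_pos_of_mem_Ioo ⟨by linarith [hx.1], hx.2⟩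
    have hs : 0 ≤ Real.sin x := Real.sin_nonneg_of_nonneg_of_le_pi hx.1 (by linarith [hx.2])
    refine ((((Real.hasDerivAt_cos x).log hc.ne').const_mul π).add
      (((hasDerivAt_id x).const_mul 2).mul
        (hasDerivAt_log_one_add_sin_sub_log_cos hc (by linarith)))).congr_deriv ?_
    simp only [id]
    ring
  have key := strictMonoOn_of_hasDerivWithinAt_pos (convex_Ico 0 (π / 2))
    (fun x hx => (hd x hx).continuousAt.continuousWithinAt)
    (fun x hx => (hd x (interior_subset hx)).hasDerivWithinAt) (fun x hx => by
      rw [interior_Ico] at hx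
      exact deriv_term_pos hx.1 hx.2)
  simpa using key ⟨le_rfl, by linarith⟩ ⟨h0.le, h1⟩ h0

/-- `term_pos` in terms of the half angle `y = π/4 - t/2`. -/
lemma term_pos_half_angle {y : ℝ} (h0 : 0 < y) (h1 : y < π / 4) :
    0 < π * Real.log (Real.sin (2 * y))
      + (π - 4 * y) * Real.log (Real.cos y / Real.sin y) := by
  have hc : 0 < Real.cos y := Real.cos_pos_of_mem_Ioo ⟨by linarith, by linarith⟩
  have hs : 0 < Real.sin y := Real.sin_pos_of_pos_of_lt_pi h0 (by linarith)
  have h := term_pos (t := π / 2 - 2 * y) (by linarith) (by linarith)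
  rw [Real.cos_pi_div_two_sub, Real.sin_pi_div_two_sub] at h
  have e : Real.log (1 + Real.cos (2 * y)) - Real.log (Real.sin (2 * y))
      = Real.log (Real.cos y / Real.sin y) := by
    rw [Real.cos_two_mul, Real.sin_two_mul, ← Real.log_div (by nlinarith) (by positivity)]
    congr 1
    field_simp
    ring
  rw [e] at h
  linarith

lemma prod_two_mul_sin (n : ℕ) (hn : 0 < n) :
    ∏ k ∈ Finset.Ico 1 n, (2 * Real.sin (π * k / n)) = n := by
  obtain ⟨m, rfl⟩ := Nat.exists_eq_succ_of_ne_zero hn.ne'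
  have h := (Complex.isPrimitiveRoot_exp (m + 1) m.succ_ne_zero).prod_one_sub_pow_eq_order
  apply_fun (‖·‖) at h
  rw [norm_prod] at h
  have hr : ‖((m : ℂ) + 1)‖ = ((m + 1 : ℕ) : ℝ) := by
    rw [← Nat.cast_succ, Complex.norm_natCast]
  rw [hr] at h
  rw [Finset.prod_Ico_eq_prod_range, Nat.succ_eq_add_one, Nat.add_sub_cancel]
  refine Eq.trans (Finset.prod_congr rfl fun k hk => ?_) h
  have hk := Finset.mem_range.1 hk
  rw [norm_sub_rev, ← Complex.exp_nat_mul]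
  have e : ((k + 1 : ℕ) : ℂ) * (2 * π * Complex.I / (m + 1 : ℕ))
      = Complex.I * ((2 * (π * (1 + k : ℕ) / (m + 1 : ℕ)) : ℝ) : ℂ) := by
    push_cast
    ring
  rw [e, Complex.norm_exp_I_mul_ofReal_sub_one, mul_div_cancel_left₀ _ two_ne_zero,
    Real.norm_of_nonneg]
  refine mul_nonneg zero_le_two (Real.sin_nonneg_of_nonneg_of_le_pi ?_ ?_)
  · positivity
  rw [div_le_iff₀ (by positivity)]
  exact mul_le_mul_of_nonneg_left (by exact_mod_cast (by omega : 1 + k ≤ m + 1)) Real.pi_pos.le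

lemma sum_log_sin (n : ℕ) (hn : 0 < n) :
    ∑ k ∈ Finset.Ico 1 n, Real.log (Real.sin (π * k / n))
      = Real.log n - ((n : ℝ) - 1) * Real.log 2 := by
  have hpos : ∀ k ∈ Finset.Ico 1 n, 0 < Real.sin (π * k / n) := by
    intro k hk
    have hk := Finset.mem_Ico.1 hk
    have hk0 : (0 : ℝ) < k := by exact_mod_cast hk.1
    have hn0 : (0 : ℝ) < n := by exact_mod_cast hn
    have hkn : (k : ℝ) < n := by exact_mod_cast hk.2
    refine Real.sin_pos_of_pos_of_lt_pi (by positivity) ?_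
    rw [div_lt_iff₀ hn0]
    gcongr
  have h := congrArg Real.log (prod_two_mul_sin n hn)
  rw [Real.log_prod fun k hk => (mul_pos two_pos (hpos k hk)).ne',
    Finset.sum_congr rfl fun k hk => Real.log_mul two_ne_zero (hpos k hk).ne',
    Finset.sum_add_distrib, Finset.sum_const, Nat.card_Ico, nsmul_eq_mul,
    Nat.cast_sub (by omega), Nat.cast_one] at h
  linarith

/-- Folding a sum that is symmetric about `n/2` and has no middle contribution. -/
lemma sum_Ico_eq_two_mul (n : ℕ) (g : ℕ → ℝ) (hsymm : ∀ k ∈ Finset.Ico 1 n, g (n - k) = g k)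
    (hmid : ∀ k, 2 * k = n → g k = 0) :
    ∑ k ∈ Finset.Ico 1 n, g k = 2 * ∑ k ∈ Finset.Icc 1 (n / 2), g k := by
  have h1 : ∑ k ∈ Finset.Ico 1 n with 2 * k < n, g k = ∑ k ∈ Finset.Icc 1 (n / 2), g k := by
    refine Finset.sum_subset ?_ ?_
    · intro k hk
      simp only [Finset.mem_filter, Finset.mem_Ico, Finset.mem_Icc] at *
      omega
    · intro k hk hk'
      simp only [Finset.mem_filter, Finset.mem_Ico, Finset.mem_Icc] at *
      exact hmid k (by omega)
  have h2 : ∑ k ∈ Finset.Ico 1 n with ¬ 2 * k < n, g k = ∑ k ∈ Finset.Icc 1 (n / 2), g k := by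
    rw [← h1]
    symm
    refine Finset.sum_of_injOn (fun k => n - k) ?_ ?_ ?_ ?_
    · intro a ha b hb hab
      simp only [Finset.coe_filter, Finset.mem_Ico, Set.mem_ofPred_eq] at *
      omega
    · intro k hk
      simp only [Finset.coe_filter, Finset.mem_Ico, Set.mem_ofPred_eq] at *
      omega
    · intro k hk hk'
      simp only [Finset.mem_filter, Finset.mem_Ico, Set.mem_image, Finset.coe_filter,
        Set.mem_ofPred_eq, not_exists, not_and] at *
      refine hmid k ?_
      by_contra hne
      exact hk' (n - k) (by omega) (by omega)
    · intro k hk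
      exact (hsymm k (Finset.mem_filter.1 hk).1).symm
  rw [← Finset.sum_filter_add_sum_filter_not _ (fun k => 2 * k < n), h1, h2, two_mul]

lemma two_mul_sum_log_sin (n : ℕ) (hn : 0 < n) :
    2 * ∑ k ∈ Finset.Icc 1 (n / 2), Real.log (Real.sin (π * k / n))
      = Real.log n - ((n : ℝ) - 1) * Real.log 2 := by
  have hn0 : (n : ℝ) ≠ 0 := by exact_mod_cast hn.ne'
  rw [← sum_log_sin n hn]
  symm
  refine sum_Ico_eq_two_mul n (fun k => Real.log (Real.sin (π * k / n))) ?_ ?_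
  · intro k hk
    have hk := Finset.mem_Ico.1 hk
    have e : π * (n - k : ℕ) / n = π - π * k / n := by
      rw [Nat.cast_sub hk.2.le]
      field_simp
    simp only [e, Real.sin_pi_sub]
  · intro k hk
    have hk0 : (k : ℝ) ≠ 0 := by
      have : k ≠ 0 := by omega
      exact_mod_cast this
    have e : π * k / n = π / 2 := by
      rw [← hk]
      push_cast
      field_simp
    simp only [e, Real.sin_pi_div_two, Real.log_one]

lemma summand_pos {n k : ℕ} (hk : 0 < k) (hkn : 2 * k < n) :
    0 < (n : ℝ) * Real.log (Real.sin (π * k / n))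
      + ((n - 2 * k : ℕ) : ℝ) *
        Real.log (Real.cos (π * k / (2 * n)) / Real.sin (π * k / (2 * n))) := by
  have hpi := Real.pi_pos
  have hk0 : (0 : ℝ) < k := by exact_mod_cast hk
  have hkn' : 2 * (k : ℝ) < n := by exact_mod_cast hkn
  have hn0 : (0 : ℝ) < n := by linarith
  have h := term_pos_half_angle (y := π * k / (2 * n)) (by positivity) (by
    rw [div_lt_div_iff₀ (by positivity) (by norm_num)]
    nlinarith)
  have e : 2 * (π * k / (2 * n)) = π * k / n := by field_simp
  rw [e] at h
  rw [Nat.cast_sub hkn.le]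
  push_cast
  refine (mul_pos_iff_of_pos_left (a := π / n) (by positivity)).1 ?_
  refine h.trans_eq ?_
  generalize Real.log (Real.sin (π * k / n)) = a
  generalize Real.log (Real.cos (π * k / (2 * n)) / Real.sin (π * k / (2 * n))) = b
  field_simp
  ring

lemma summand_nonneg {n k : ℕ} (hk : 0 < k) (hkn : 2 * k ≤ n) :
    0 ≤ (n : ℝ) * Real.log (Real.sin (π * k / n))
      + ((n - 2 * k : ℕ) : ℝ) *
        Real.log (Real.cos (π * k / (2 * n)) / Real.sin (π * k / (2 * n))) := by
  rcases hkn.lt_or_eq with h | h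
  · exact (summand_pos hk h).le
  · have hk0 : (k : ℝ) ≠ 0 := by exact_mod_cast hk.ne'
    have e : π * k / n = π / 2 := by
      rw [← h]
      push_cast
      field_simp
    rw [e, h]
    simp

/-- The value of the Atiyah determinant at the vertices of a regular `n`-gon
exceeds `1` for every `n ≥ 3`. -/
theorem atiyah_det_regular_ngon_gt_one (n : ℕ) (hn : 3 ≤ n) :
    1 < (n : ℝ) ^ ((n : ℝ) / 2) * (2 : ℝ) ^ (((n : ℝ) * (1 - (n : ℝ))) / 2) *
        ∏ k ∈ Finset.Icc 1 (n / 2),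
          (Real.cos (Real.pi * k / (2 * n)) / Real.sin (Real.pi * k / (2 * n))) ^ (n - 2 * k) := by
  have hn0 : (0 : ℝ) < n := by exact_mod_cast (by omega : 0 < n)
  have hcot : ∀ k ∈ Finset.Icc 1 (n / 2),
      0 < Real.cos (π * k / (2 * n)) / Real.sin (π * k / (2 * n)) := by
    intro k hk
    have hk := Finset.mem_Icc.1 hk
    have hk0 : (0 : ℝ) < k := by exact_mod_cast hk.1
    have hkn : (k : ℝ) < n := by exact_mod_cast (by omega : k < n)
    have hpi := Real.pi_pos
    have hy0 : 0 < π * k / (2 * n) := by positivity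
    have hy1 : π * k / (2 * n) < π / 2 := by
      rw [div_lt_div_iff₀ (by positivity) (by norm_num)]
      nlinarith
    exact div_pos (Real.cos_pos_of_mem_Ioo ⟨by linarith, hy1⟩)
      (Real.sin_pos_of_pos_of_lt_pi hy0 (by linarith))
  have hprod : 0 < ∏ k ∈ Finset.Icc 1 (n / 2),
      (Real.cos (π * k / (2 * n)) / Real.sin (π * k / (2 * n))) ^ (n - 2 * k) :=
    Finset.prod_pos fun k hk => pow_pos (hcot k hk) _
  have hA : 0 < (n : ℝ) ^ ((n : ℝ) / 2) := Real.rpow_pos_of_pos hn0 _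
  have hB : 0 < (2 : ℝ) ^ (((n : ℝ) * (1 - (n : ℝ))) / 2) := Real.rpow_pos_of_pos two_pos _
  refine (Real.log_pos_iff (by positivity)).1 ?_
  rw [Real.log_mul (by positivity) hprod.ne', Real.log_mul hA.ne' hB.ne',
    Real.log_rpow hn0, Real.log_rpow two_pos,
    Real.log_prod fun k hk => (pow_pos (hcot k hk) _).ne']
  simp only [Real.log_pow]
  have hsum : 0 < ∑ k ∈ Finset.Icc 1 (n / 2), ((n : ℝ) * Real.log (Real.sin (π * k / n))
      + ((n - 2 * k : ℕ) : ℝ) *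
        Real.log (Real.cos (π * k / (2 * n)) / Real.sin (π * k / (2 * n)))) := by
    refine Finset.sum_pos' (fun k hk => ?_) ⟨1, ?_, summand_pos one_pos (by omega)⟩
    · have hk := Finset.mem_Icc.1 hk
      exact summand_nonneg hk.1 (by omega)
    · exact Finset.mem_Icc.2 (by omega)
  rw [Finset.sum_add_distrib, ← Finset.mul_sum] at hsum
  have hsin := two_mul_sum_log_sin n (by omega)
  linear_combination hsum + (n : ℝ) / 2 * hsin
end

section
/- lim_{n→∞} ∏_{1 ≤ k ≤ n/2} (cot(πk/(2n)))^{(n-2k)/n²} = exp(7ζ(3)/(2π²)), where for each integer n ≥ 1 the product runs over all integers k with 1 ≤ k ≤ n/2. -/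
/-!
Taking logarithms turns the product into the Riemann sum `(1/n) ∑_{k ≤ n/2} f (k/n)` of
`f x = (1 - 2x) log cot (πx/2)` on `(0, 1/2]`. This `f` is nonnegative and decreasing, with an
integrable logarithmic singularity at `0`, so the sum differs from the integral of `f` over
`[1/n, ⌊n/2⌋/n]` by at most `f (1/n) / n ≤ (log n) / n` (`riemannSum_sandwich`), and it converges
to `∫₀^{1/2} f`.

The integral (`integral_weighted_logCot`) comes from the Fourier series
`log cot (πx/2) = 2 ∑_{j odd} cos (jπx) / j` together with
`∫₀^{1/2} (1 - 2x) cos (jπx) dx = 2 / (jπ)²` for odd `j`, which give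
`(4/π²) ∑_{j odd} 1/j³ = (4/π²)(7/8) ζ(3)`. As the Fourier series converges only conditionally, it is
replaced by its Abel means: inserting `r ^ j` with `0 ≤ r < 1` gives the real part of
`log (1 + z) - log (1 - z)` at `z = r e^{iπx}`. These means are dominated by `log cot (πx/2)`
uniformly in `r` (`abs_abelLogCot_le`), so dominated convergence applies as `r → 1`.
-/

open scoped Real
open Filter Topology MeasureTheory Set

/-! ### Abel means of the Fourier series of `log cot` -/

/-- The function `log cot (πx/2)`, with the cotangent written as cosine over sine. -/
noncomputable def logCot (x : ℝ) : ℝ := Real.log (Real.cos (π * x / 2) / Real.sin (π * x / 2))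

/-- The Abel mean `2 ∑_{j odd} r ^ j cos (jπx) / j` in closed form, namely
`log (‖1 + z‖ / ‖1 - z‖)` at `z = r e^{iπx}`, written through the squared norms
`1 + r² ± 2r cos (πx)`. -/
noncomputable def abelLogCot (r x : ℝ) : ℝ :=
  (Real.log (1 + r ^ 2 + 2 * r * Real.cos (π * x)) -
    Real.log (1 + r ^ 2 - 2 * r * Real.cos (π * x))) / 2

lemma hasSum_of_eq {f g : ℕ → ℝ} {a : ℝ} (hf : HasSum f a) (h : ∀ n, g n = f n) :
    HasSum g a :=
  (funext h : g = f) ▸ hf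

/-- The Fourier series of the Abel mean, summed over all `n`: the factor `1 - (-1) ^ n` is `2` for
odd `n` and `0` for even `n`. It is the difference of the real parts of the Taylor series of
`-log (1 - z)` and `-log (1 + z)`. -/
lemma hasSum_abelLogCot {r : ℝ} (h0 : 0 ≤ r) (h1 : r < 1) (x : ℝ) :
    HasSum (fun n : ℕ => (1 - (-1) ^ n) * (r ^ n * Real.cos (n * π * x) / n)) (abelLogCot r x) := by
  set z : ℂ := r * Complex.exp ((π * x : ℝ) * Complex.I) with hz
  have hnorm : ‖z‖ < 1 := by
    rw [hz, norm_mul, Complex.norm_exp_ofReal_mul_I, Complex.norm_real, Real.norm_of_nonneg h0]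
    simpa using h1
  have hre : z.re = r * Real.cos (π * x) := by
    rw [hz, Complex.re_ofReal_mul, Complex.exp_ofReal_mul_I_re]
  have him : z.im = r * Real.sin (π * x) := by
    rw [hz, Complex.im_ofReal_mul, Complex.exp_ofReal_mul_I_im]
  have hpow (n : ℕ) : (z ^ n / n).re = r ^ n * Real.cos (n * π * x) / n := by
    have : z ^ n = ((r ^ n : ℝ) : ℂ) * Complex.exp ((n * π * x : ℝ) * Complex.I) := by
      rw [hz, mul_pow, ← Complex.exp_nat_mul]
      push_cast
      ring_nf
    rw [this, Complex.div_natCast_re, Complex.re_ofReal_mul, Complex.exp_ofReal_mul_I_re]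
  have hpow' (n : ℕ) : ((-z) ^ n / n).re = (-1) ^ n * (r ^ n * Real.cos (n * π * x) / n) := by
    rw [← hpow, neg_pow, mul_div_assoc]
    have : ((-1 : ℂ) ^ n) = (((-1) ^ n : ℝ) : ℂ) := by push_cast; rfl
    rw [this, Complex.re_ofReal_mul]
  have key (w : ℂ) : Real.log ‖w‖ = Real.log (w.re ^ 2 + w.im ^ 2) / 2 := by
    rw [Complex.norm_def, Real.log_sqrt (Complex.normSq_nonneg _), Complex.normSq_apply]
    ring_nf
  have hs := Real.sin_sq_add_cos_sq (π * x)
  have hA := (Complex.hasSum_re (Complex.hasSum_taylorSeries_neg_log hnorm)).sub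
    (Complex.hasSum_re (Complex.hasSum_taylorSeries_neg_log (z := -z) (by simpa using hnorm)))
  simp only [hpow, hpow', Complex.neg_re, Complex.log_re, key] at hA
  have hval : abelLogCot r x =
      -(Real.log ((1 - z).re ^ 2 + (1 - z).im ^ 2) / 2) -
        -(Real.log ((1 - -z).re ^ 2 + (1 - -z).im ^ 2) / 2) := by
    simp only [abelLogCot, Complex.sub_re, Complex.sub_im, Complex.one_re, Complex.one_im,
      Complex.neg_re, Complex.neg_im, hre, him]
    have e1 : (1 - r * Real.cos (π * x)) ^ 2 + (0 - r * Real.sin (π * x)) ^ 2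
        = 1 + r ^ 2 - 2 * r * Real.cos (π * x) := by linear_combination r ^ 2 * hs
    have e2 : (1 - -(r * Real.cos (π * x))) ^ 2 + (0 - -(r * Real.sin (π * x))) ^ 2
        = 1 + r ^ 2 + 2 * r * Real.cos (π * x) := by linear_combination r ^ 2 * hs
    rw [e1, e2]
    ring
  rw [hval]
  exact hasSum_of_eq hA fun n => by ring

lemma integral_weight_mul_cos {a : ℝ} (ha : a ≠ 0) :
    ∫ x in (0 : ℝ)..(1 / 2), (1 - 2 * x) * Real.cos (a * x) = 2 * (1 - Real.cos (a / 2)) / a ^ 2 := by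
  have hd (x : ℝ) : HasDerivAt
      (fun x => (1 - 2 * x) * (Real.sin (a * x) / a) - 2 * (Real.cos (a * x) / a ^ 2))
      ((1 - 2 * x) * Real.cos (a * x)) x := by
    have hl : HasDerivAt (fun x : ℝ => a * x) a x := by
      simpa using (hasDerivAt_id x).const_mul a
    have hw : HasDerivAt (fun x : ℝ => 1 - 2 * x) (-2) x := by
      simpa using ((hasDerivAt_id x).const_mul 2).const_sub 1
    refine ((hw.mul (hl.sin.div_const a)).sub
      ((hl.cos.div_const (a ^ 2)).const_mul 2)).congr_deriv ?_
    field_simp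
    ring
  rw [intervalIntegral.integral_eq_sub_of_hasDerivAt (fun x _ => hd x)
    (by apply Continuous.intervalIntegrable; fun_prop)]
  simp
  field_simp
  ring

lemma integral_term (r : ℝ) (n : ℕ) :
    ∫ x in (0 : ℝ)..(1 / 2), (1 - 2 * x) * ((1 - (-1) ^ n) * (r ^ n * Real.cos (n * π * x) / n))
      = (1 - (-1) ^ n) * (2 / π ^ 2 / n ^ 3) * r ^ n := by
  rcases Nat.even_or_odd n with hn | hn
  · simp [hn.neg_one_pow]
  · have hn0 : (n : ℝ) ≠ 0 := by
      rintro h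
      simp_all
    have hc : Real.cos (n * π / 2) = 0 := by
      obtain ⟨k, rfl⟩ := hn
      rw [Real.cos_eq_zero_iff]
      exact ⟨k, by push_cast; ring⟩
    have : ∀ x : ℝ, (1 - 2 * x) * ((1 - (-1) ^ n) * (r ^ n * Real.cos (n * π * x) / n))
        = (1 - (-1) ^ n) * r ^ n / n * ((1 - 2 * x) * Real.cos (n * π * x)) := by
      intro x; ring
    simp_rw [this]
    rw [intervalIntegral.integral_const_mul,
      integral_weight_mul_cos (mul_ne_zero hn0 Real.pi_ne_zero), hc]
    have := Real.pi_ne_zero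
    field_simp
    ring

/-- The sum over odd `n` of `(4/π²) / n³`, obtained by removing the even terms, which make up
`ζ(3) / 8`, from the series of `ζ(3)`. -/
lemma hasSum_odd_cubes :
    HasSum (fun n : ℕ => (1 - (-1) ^ n) * (2 / π ^ 2 / (n : ℝ) ^ 3))
      (7 * (riemannZeta 3).re / (2 * π ^ 2)) := by
  have hs : Summable (fun n : ℕ => 1 / (n : ℝ) ^ 3) :=
    Real.summable_one_div_nat_pow.mpr (by norm_num)
  have hz : (riemannZeta 3).re = ∑' n : ℕ, 1 / (n : ℝ) ^ 3 := by
    have := zeta_nat_eq_tsum_of_gt_one (k := 3) (by norm_num)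
    rw [show ((3 : ℕ) : ℂ) = 3 by norm_num] at this
    rw [this, ← Complex.ofReal_re (∑' n : ℕ, 1 / (n : ℝ) ^ 3)]
    push_cast
    rfl
  have hZ : HasSum (fun n : ℕ => 1 / (n : ℝ) ^ 3) (riemannZeta 3).re := hz ▸ hs.hasSum
  have hE : HasSum (fun k : ℕ => 1 / ((2 * k : ℕ) : ℝ) ^ 3) ((riemannZeta 3).re / 8) := by
    refine hasSum_of_eq (hZ.div_const 8) fun k => ?_
    push_cast
    ring
  have hO : Summable (fun k : ℕ => 1 / ((2 * k + 1 : ℕ) : ℝ) ^ 3) :=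
    hs.comp_injective (i := fun k : ℕ => 2 * k + 1) (fun a b h => by simpa using h)
  have hO' : HasSum (fun k : ℕ => 1 / ((2 * k + 1 : ℕ) : ℝ) ^ 3) (7 / 8 * (riemannZeta 3).re) := by
    have := (hE.even_add_odd (f := fun n : ℕ => 1 / (n : ℝ) ^ 3) hO.hasSum).unique hZ
    convert hO.hasSum using 1
    linarith
  have h0 : HasSum (fun k : ℕ => (1 - (-1) ^ (2 * k)) * (2 / π ^ 2 / ((2 * k : ℕ) : ℝ) ^ 3)) 0 := by
    simp
  have h1 : HasSum
      (fun k : ℕ => (1 - (-1) ^ (2 * k + 1)) * (2 / π ^ 2 / ((2 * k + 1 : ℕ) : ℝ) ^ 3))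
      (7 * (riemannZeta 3).re / (2 * π ^ 2)) := by
    rw [show 7 * (riemannZeta 3).re / (2 * π ^ 2) = 4 / π ^ 2 * (7 / 8 * (riemannZeta 3).re) by
      field_simp; ring]
    refine hasSum_of_eq (hO'.mul_left (4 / π ^ 2)) fun k => ?_
    rw [(odd_two_mul_add_one k).neg_one_pow]
    ring
  simpa using h0.even_add_odd
    (f := fun n : ℕ => (1 - (-1) ^ n) * (2 / π ^ 2 / (n : ℝ) ^ 3)) h1

lemma continuous_abelLogCot {r : ℝ} (h0 : 0 ≤ r) (h1 : r < 1) : Continuous (abelLogCot r) := by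
  unfold abelLogCot
  refine Continuous.div_const (Continuous.sub ?_ ?_) _
  · refine Continuous.log (by fun_prop) fun x => ?_
    nlinarith [Real.neg_one_le_cos (π * x), Real.cos_le_one (π * x)]
  · refine Continuous.log (by fun_prop) fun x => ?_
    nlinarith [Real.neg_one_le_cos (π * x), Real.cos_le_one (π * x)]

lemma integral_abelLogCot {r : ℝ} (h0 : 0 ≤ r) (h1 : r < 1) :
    ∫ x in (0 : ℝ)..(1 / 2), (1 - 2 * x) * abelLogCot r x
      = ∑' n : ℕ, (1 - (-1) ^ n) * (2 / π ^ 2 / (n : ℝ) ^ 3) * r ^ n := by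
  have hsum : HasSum (fun n : ℕ => ∫ x in (0 : ℝ)..(1 / 2),
      (1 - 2 * x) * ((1 - (-1) ^ n) * (r ^ n * Real.cos (n * π * x) / n)))
      (∫ x in (0 : ℝ)..(1 / 2), (1 - 2 * x) * abelLogCot r x) := by
    refine intervalIntegral.hasSum_integral_of_dominated_convergence
      (fun n _ => 2 * r ^ n) (fun n => ?_) (fun n => ?_) ?_ ?_ ?_
    · exact Continuous.aestronglyMeasurable (by fun_prop)
    · refine ae_of_all _ fun x hx => ?_
      rw [uIoc_of_le (by norm_num)] at hx
      have hw : |1 - 2 * x| ≤ 1 := by rw [abs_le]; constructor <;> linarith [hx.1, hx.2]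
      have hp : |1 - (-1 : ℝ) ^ n| ≤ 2 := by
        rcases neg_one_pow_eq_or ℝ n with h | h <;> rw [h] <;> norm_num
      have hc : |r ^ n * Real.cos (n * π * x) / n| ≤ r ^ n := by
        rw [abs_div, abs_mul, abs_of_nonneg (pow_nonneg h0 n), Nat.abs_cast]
        rcases Nat.eq_zero_or_pos n with rfl | hn
        · simp
        · have h1n : (1 : ℝ) ≤ n := by exact_mod_cast hn
          refine (div_le_self (by positivity) h1n).trans ?_
          exact mul_le_of_le_one_right (by positivity) (Real.abs_cos_le_one _)
      rw [Real.norm_eq_abs, abs_mul, abs_mul]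
      calc _ ≤ 1 * (2 * r ^ n) := by gcongr
        _ = _ := one_mul _
    · exact ae_of_all _ fun x _ => (summable_geometric_of_lt_one h0 h1).mul_left 2
    · exact intervalIntegrable_const
    · exact ae_of_all _ fun x _ => (hasSum_abelLogCot h0 h1 x).mul_left _
  rw [← hsum.tsum_eq]
  exact tsum_congr fun n => integral_term r n

/-! ### Bounds and monotonicity of `log cot` -/

lemma cos_sin_pos {x : ℝ} (h0 : 0 < x) (h1 : x ≤ 1 / 2) :
    0 < Real.cos (π * x / 2) ∧ 0 < Real.sin (π * x / 2) := by
  have := Real.pi_pos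
  exact ⟨Real.cos_pos_of_mem_Ioo ⟨by nlinarith, by nlinarith⟩,
    Real.sin_pos_of_pos_of_lt_pi (by positivity) (by nlinarith)⟩

/-- The closed form of `abelLogCot` at `r = 1` up to a factor `2` inside each logarithm, by the
half-angle formulas. -/
lemma logCot_eq {x : ℝ} (h0 : 0 < x) (h1 : x ≤ 1 / 2) :
    logCot x = (Real.log (1 + Real.cos (π * x)) - Real.log (1 - Real.cos (π * x))) / 2 := by
  obtain ⟨hc, hs⟩ := cos_sin_pos h0 h1
  have h2 : Real.cos (π * x) = 2 * Real.cos (π * x / 2) ^ 2 - 1 := by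
    rw [← Real.cos_two_mul]; ring_nf
  have h3 := Real.sin_sq_add_cos_sq (π * x / 2)
  have e1 : 1 + Real.cos (π * x) = 2 * Real.cos (π * x / 2) ^ 2 := by linarith
  have e2 : 1 - Real.cos (π * x) = 2 * Real.sin (π * x / 2) ^ 2 := by linarith
  rw [logCot, e1, e2, Real.log_div hc.ne' hs.ne', Real.log_mul two_ne_zero (by positivity),
    Real.log_mul two_ne_zero (by positivity), Real.log_pow, Real.log_pow]
  push_cast
  ring

lemma cos_pi_mul_mem {x : ℝ} (h0 : 0 < x) (h1 : x ≤ 1 / 2) :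
    0 ≤ Real.cos (π * x) ∧ Real.cos (π * x) < 1 := by
  have := Real.pi_pos
  refine ⟨Real.cos_nonneg_of_mem_Icc ⟨by nlinarith, by nlinarith⟩, ?_⟩
  rw [← Real.cos_zero]
  exact Real.cos_lt_cos_of_nonneg_of_le_pi le_rfl (by nlinarith) (by positivity)

/-- The Abel means are dominated by their limit. With `c = cos (πx)` this is
`(1 + r² + 2rc)(1 - c) ≤ (1 + c)(1 + r² - 2rc)`, whose two sides differ by `2c(1 - r)²`. -/
lemma abs_abelLogCot_le {r x : ℝ} (hr0 : 0 ≤ r) (hr1 : r < 1) (h0 : 0 < x) (h1 : x ≤ 1 / 2) :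
    |abelLogCot r x| ≤ logCot x := by
  obtain ⟨hc0, hc1⟩ := cos_pi_mul_mem h0 h1
  rw [logCot_eq h0 h1, abelLogCot]
  set c := Real.cos (π * x)
  have hrc : 0 ≤ r * c := mul_nonneg hr0 hc0
  have hm : 0 < 1 + r ^ 2 - 2 * r * c := by nlinarith
  have hp : 0 < 1 + r ^ 2 + 2 * r * c := by nlinarith
  have hc : 0 < 1 - c := by linarith
  rw [abs_of_nonneg]
  · have : Real.log ((1 + r ^ 2 + 2 * r * c) * (1 - c)) ≤
        Real.log ((1 + c) * (1 + r ^ 2 - 2 * r * c)) :=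
      Real.log_le_log (by positivity) (by nlinarith [mul_nonneg hc0 (sq_nonneg (1 - r))])
    rw [Real.log_mul hp.ne' hc.ne', Real.log_mul (by positivity) hm.ne'] at this
    linarith
  · have := Real.log_le_log hm (show 1 + r ^ 2 - 2 * r * c ≤ 1 + r ^ 2 + 2 * r * c by linarith)
    linarith

lemma logCot_nonneg {x : ℝ} (h0 : 0 < x) (h1 : x ≤ 1 / 2) : 0 ≤ logCot x :=
  (abs_nonneg _).trans (abs_abelLogCot_le le_rfl one_pos h0 h1)

/-- Follows from `cot θ ≤ 1/θ` and `π/2 ≥ 1`. -/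
lemma logCot_le_neg_log {x : ℝ} (h0 : 0 < x) (h1 : x ≤ 1 / 2) : logCot x ≤ -Real.log x := by
  obtain ⟨hc, hs⟩ := cos_sin_pos h0 h1
  have hpi := Real.pi_gt_three
  rw [logCot, ← Real.log_inv]
  refine Real.log_le_log (by positivity) ?_
  have ht := Real.le_tan (x := π * x / 2) (by positivity) (by nlinarith)
  rw [Real.tan_eq_sin_div_cos, le_div_iff₀ hc] at ht
  rw [div_le_iff₀ hs, inv_mul_eq_div, le_div_iff₀ h0]
  nlinarith [mul_pos hc h0]

lemma antitoneOn_logCot : AntitoneOn logCot (Ioc 0 (1 / 2)) := by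
  intro x hx y hy hxy
  obtain ⟨hcx, hsx⟩ := cos_sin_pos hx.1 hx.2
  obtain ⟨hcy, hsy⟩ := cos_sin_pos hy.1 hy.2
  have hpi := Real.pi_pos
  have hx0 := hx.1
  have hy2 := hy.2
  refine Real.log_le_log (by positivity) (div_le_div₀ hcx.le ?_ hsx ?_)
  · exact Real.cos_le_cos_of_nonneg_of_le_pi (by positivity) (by nlinarith) (by gcongr)
  · exact Real.sin_le_sin_of_le_of_le_pi_div_two (by nlinarith) (by nlinarith) (by gcongr)

lemma antitoneOn_weighted : AntitoneOn (fun x => (1 - 2 * x) * logCot x) (Ioc 0 (1 / 2)) := by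
  intro x hx y hy hxy
  exact mul_le_mul (by linarith) (antitoneOn_logCot hx hy hxy) (logCot_nonneg hy.1 hy.2)
    (by linarith [hx.2])

lemma weighted_nonneg {x : ℝ} (h0 : 0 < x) (h1 : x ≤ 1 / 2) : 0 ≤ (1 - 2 * x) * logCot x :=
  mul_nonneg (by linarith) (logCot_nonneg h0 h1)

lemma measurable_logCot : Measurable logCot := by
  unfold logCot
  fun_prop

lemma intervalIntegrable_weighted :
    IntervalIntegrable (fun x => (1 - 2 * x) * logCot x) volume 0 (1 / 2) := by
  refine (intervalIntegral.intervalIntegrable_log' (a := 0) (b := 1 / 2)).mono_fun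
    (Measurable.aestronglyMeasurable (by have := measurable_logCot; fun_prop)) ?_
  refine (ae_restrict_iff' measurableSet_uIoc).mpr (ae_of_all _ fun x hx => ?_)
  rw [uIoc_of_le (by norm_num)] at hx
  have h1 := logCot_le_neg_log hx.1 hx.2
  have h2 := logCot_nonneg hx.1 hx.2
  have hx0 := hx.1
  change ‖(1 - 2 * x) * logCot x‖ ≤ ‖Real.log x‖
  rw [Real.norm_eq_abs, Real.norm_eq_abs, abs_of_nonneg (weighted_nonneg hx.1 hx.2),
    abs_of_nonpos (by linarith)]
  nlinarith

/-! ### The integral and the Riemann sum -/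

lemma integral_weighted_logCot :
    ∫ x in (0 : ℝ)..(1 / 2), (1 - 2 * x) * logCot x = 7 * (riemannZeta 3).re / (2 * π ^ 2) := by
  have hIoo : ∀ᶠ r in 𝓝[<] (1 : ℝ), r ∈ Ioo (0 : ℝ) 1 := Ioo_mem_nhdsLT one_pos
  have hL : Tendsto (fun r => ∫ x in (0 : ℝ)..(1 / 2), (1 - 2 * x) * abelLogCot r x)
      (𝓝[<] 1) (𝓝 (∫ x in (0 : ℝ)..(1 / 2), (1 - 2 * x) * logCot x)) := by
    refine intervalIntegral.tendsto_integral_filter_of_dominated_convergence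
      (fun x => (1 - 2 * x) * logCot x) ?_ ?_ intervalIntegrable_weighted ?_
    · filter_upwards [hIoo] with r hr
      have := continuous_abelLogCot hr.1.le hr.2
      exact Continuous.aestronglyMeasurable (by fun_prop)
    · filter_upwards [hIoo] with r hr
      refine ae_of_all _ fun x hx => ?_
      rw [uIoc_of_le (by norm_num)] at hx
      have hw : 0 ≤ 1 - 2 * x := by linarith [hx.2]
      rw [Real.norm_eq_abs, abs_mul, abs_of_nonneg hw]
      exact mul_le_mul_of_nonneg_left (abs_abelLogCot_le hr.1.le hr.2 hx.1 hx.2) hw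
    · refine ae_of_all _ fun x hx => ?_
      rw [uIoc_of_le (by norm_num)] at hx
      obtain ⟨hc0, hc1⟩ := cos_pi_mul_mem hx.1 hx.2
      refine Tendsto.const_mul _ ?_
      have hlim : logCot x = abelLogCot 1 x := by
        rw [logCot_eq hx.1 hx.2, abelLogCot,
          show 1 + 1 ^ 2 + 2 * 1 * Real.cos (π * x) = 2 * (1 + Real.cos (π * x)) by ring,
          show 1 + 1 ^ 2 - 2 * 1 * Real.cos (π * x) = 2 * (1 - Real.cos (π * x)) by ring,
          Real.log_mul two_ne_zero (by linarith), Real.log_mul two_ne_zero (by linarith)]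
        ring
      rw [hlim]
      refine Tendsto.mono_left ?_ nhdsWithin_le_nhds
      have : ContinuousAt (fun r => abelLogCot r x) 1 := by
        unfold abelLogCot
        refine ContinuousAt.div_const (ContinuousAt.sub ?_ ?_) _
        · exact ContinuousAt.log (by fun_prop) (by linarith)
        · exact ContinuousAt.log (by fun_prop) (by linarith)
      exact this
  have hR : Tendsto (fun r : ℝ => ∑' n : ℕ, (1 - (-1) ^ n) * (2 / π ^ 2 / (n : ℝ) ^ 3) * r ^ n)
      (𝓝[<] 1) (𝓝 (∑' n : ℕ, (1 - (-1) ^ n) * (2 / π ^ 2 / (n : ℝ) ^ 3))) := by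
    refine tendsto_tsum_of_dominated_convergence
      (bound := fun n : ℕ => |(1 - (-1) ^ n) * (2 / π ^ 2 / (n : ℝ) ^ 3)|)
      hasSum_odd_cubes.summable.abs (fun n => ?_) ?_
    · have : Continuous (fun r : ℝ => (1 - (-1) ^ n) * (2 / π ^ 2 / (n : ℝ) ^ 3) * r ^ n) := by
        fun_prop
      simpa using (this.tendsto 1).mono_left nhdsWithin_le_nhds
    · filter_upwards [hIoo] with r hr n
      rw [norm_mul, Real.norm_eq_abs, norm_pow, Real.norm_of_nonneg hr.1.le]
      exact mul_le_of_le_one_right (abs_nonneg _) (pow_le_one₀ hr.1.le hr.2.le)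
  rw [hasSum_odd_cubes.tsum_eq] at hR
  refine tendsto_nhds_unique hL (hR.congr' ?_)
  filter_upwards [hIoo] with r hr using (integral_abelLogCot hr.1.le hr.2).symm

/-- Integral comparison for the decreasing weighted `log cot`. The integral starts at `1/n`, since
at `0` the formal value of `logCot` is `log 0 = 0` and monotonicity fails there; the first term of
the sum is bounded by `log n` instead. -/
lemma riemannSum_sandwich {n : ℕ} (hn : 2 ≤ n) :
    (∫ x in (1 / n : ℝ)..((n / 2 : ℕ) / n : ℝ), (1 - 2 * x) * logCot x) ≤
      (∑ k ∈ Finset.Icc 1 (n / 2), (1 - 2 * (k / n : ℝ)) * logCot (k / n)) / n ∧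
    (∑ k ∈ Finset.Icc 1 (n / 2), (1 - 2 * (k / n : ℝ)) * logCot (k / n)) / n ≤
      (∫ x in (1 / n : ℝ)..((n / 2 : ℕ) / n : ℝ), (1 - 2 * x) * logCot x) +
        Real.log n / n := by
  set f : ℝ → ℝ := fun x => (1 - 2 * x) * logCot x with hf
  set m := n / 2 with hm
  have hm1 : 1 ≤ m := by omega
  have hn0 : (0 : ℝ) < n := by positivity
  have hmn : (m : ℝ) / n ≤ 1 / 2 := by
    rw [div_le_iff₀ hn0]
    have : m * 2 ≤ n := by omega
    have : (m : ℝ) * 2 ≤ n := by exact_mod_cast this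
    linarith
  have hmem {t : ℝ} (ht : t ∈ Icc ((1 : ℕ) : ℝ) m) : t / n ∈ Ioc (0 : ℝ) (1 / 2) := by
    have h1 : 1 ≤ t := by simpa using ht.1
    refine ⟨by positivity, le_trans ?_ hmn⟩
    have := ht.2
    gcongr
  have hanti : AntitoneOn (fun t : ℝ => f (t / n)) (Icc ((1 : ℕ) : ℝ) m) := by
    intro s hs t ht hst
    exact antitoneOn_weighted (hmem hs) (hmem ht) (by gcongr)
  have hint : ∫ t in ((1 : ℕ) : ℝ)..m, f (t / n) = n * ∫ x in (1 / n : ℝ)..(m / n : ℝ), f x := by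
    rw [intervalIntegral.integral_comp_div _ hn0.ne']
    simp
  have hlo := hanti.integral_le_sum_Ico hm1
  have hhi := hanti.sum_le_integral_Ico hm1
  rw [hint] at hlo hhi
  have hmm : (m : ℝ) / n ∈ Ioc (0 : ℝ) (1 / 2) :=
    hmem ⟨by exact_mod_cast hm1, le_rfl⟩
  have h11 : (1 : ℝ) / n ∈ Ioc (0 : ℝ) (1 / 2) :=
    hmem ⟨by simp, by exact_mod_cast hm1⟩
  -- The lower bound drops the term `k = m`, the upper bound splits off the term `k = 1`.
  have hlast : 0 ≤ f (m / n) := weighted_nonneg hmm.1 hmm.2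
  have hfirst : f (1 / n) ≤ Real.log n := by
    have h1 := logCot_le_neg_log h11.1 h11.2
    have h2 := logCot_nonneg h11.1 h11.2
    have h3 := h11.1
    rw [one_div, Real.log_inv, neg_neg, ← one_div] at h1
    simp only [hf]
    nlinarith
  have hI : Finset.Icc 1 m = Finset.Ico 1 (m + 1) := by ext; simp
  have hs1 : ∑ k ∈ Finset.Icc 1 m, f (k / n) = ∑ k ∈ Finset.Ico 1 m, f (k / n) + f (m / n) := by
    rw [hI, Finset.sum_Ico_succ_top hm1]
  have hs2 : ∑ k ∈ Finset.Icc 1 m, f (k / n)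
      = f (1 / n) + ∑ k ∈ Finset.Ico 1 m, f ((k + 1 : ℕ) / n) := by
    rw [hI, Finset.sum_eq_sum_Ico_succ_bot (by omega),
      Finset.sum_Ico_add' (fun k : ℕ => f (k / n)) 1 m 1]
    simp
  constructor
  · rw [le_div_iff₀ hn0]
    change _ ≤ ∑ k ∈ Finset.Icc 1 m, f (k / n)
    linarith
  · rw [div_le_iff₀ hn0, add_mul, div_mul_cancel₀ _ hn0.ne']
    change ∑ k ∈ Finset.Icc 1 m, f (k / n) ≤ _
    linarith

lemma tendsto_half_div : Tendsto (fun n : ℕ => ((n / 2 : ℕ) : ℝ) / n) atTop (𝓝 (1 / 2)) := by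
  have h := tendsto_nat_floor_mul_div_atTop (R := ℝ) (a := 1 / 2) (by norm_num)
  refine (h.comp tendsto_natCast_atTop_atTop).congr fun n => ?_
  simp only [Function.comp]
  congr 2
  rw [one_div_mul_eq_div]
  exact_mod_cast Nat.floor_div_eq_div n 2

lemma tendsto_truncated_integral :
    Tendsto (fun n : ℕ => ∫ x in (1 / n : ℝ)..((n / 2 : ℕ) / n : ℝ), (1 - 2 * x) * logCot x)
      atTop (𝓝 (7 * (riemannZeta 3).re / (2 * π ^ 2))) := by
  set f : ℝ → ℝ := fun x => (1 - 2 * x) * logCot x with hf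
  have hint := intervalIntegrable_weighted
  have hcont : ContinuousOn (fun b => ∫ x in (0 : ℝ)..b, f x) (Icc 0 (1 / 2)) := by
    have := intervalIntegral.continuousOn_primitive_interval' hint left_mem_uIcc
    rwa [uIcc_of_le (by norm_num)] at this
  have hmem1 : ∀ᶠ n : ℕ in atTop, (1 / n : ℝ) ∈ Icc (0 : ℝ) (1 / 2) := by
    filter_upwards [eventually_ge_atTop 2] with n hn
    refine ⟨by positivity, ?_⟩
    have : (2 : ℝ) ≤ n := by exact_mod_cast hn
    gcongr
  have hmem2 : ∀ᶠ n : ℕ in atTop, ((n / 2 : ℕ) / n : ℝ) ∈ Icc (0 : ℝ) (1 / 2) := by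
    filter_upwards [eventually_ge_atTop 2] with n hn
    refine ⟨by positivity, ?_⟩
    rw [div_le_iff₀ (by positivity)]
    have := Nat.cast_div_le (α := ℝ) (m := n) (n := 2)
    push_cast at this
    linarith
  have t1 := (hcont 0 (by norm_num)).tendsto.comp
    (tendsto_nhdsWithin_iff.mpr ⟨tendsto_one_div_atTop_nhds_zero_nat, hmem1⟩)
  have t2 := (hcont (1 / 2) (by norm_num)).tendsto.comp
    (tendsto_nhdsWithin_iff.mpr ⟨tendsto_half_div, hmem2⟩)
  have t := t2.sub t1
  rw [intervalIntegral.integral_same, sub_zero, integral_weighted_logCot] at t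
  refine t.congr' ?_
  filter_upwards [hmem1, hmem2] with n h1 h2
  have hsub {b : ℝ} (hb : b ∈ Icc (0 : ℝ) (1 / 2)) : IntervalIntegrable f volume 0 b :=
    hint.mono_set (uIcc_subset_uIcc left_mem_uIcc (by rwa [uIcc_of_le (by norm_num)]))
  exact intervalIntegral.integral_interval_sub_left (hsub h2) (hsub h1)

/-- `lim_{n→∞} ∏_{1 ≤ k ≤ n/2} cot(πk/(2n))^((n-2k)/n²) = exp(7ζ(3)/(2π²))`. -/
theorem tendsto_prod_cot_rpow :
    Filter.Tendsto
      (fun n : ℕ => ∏ k ∈ Finset.Icc 1 (n / 2),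
        (Real.cos (Real.pi * k / (2 * n)) / Real.sin (Real.pi * k / (2 * n))) ^
          (((n : ℝ) - 2 * k) / (n : ℝ) ^ 2))
      Filter.atTop
      (nhds (Real.exp (7 * (riemannZeta 3).re / (2 * Real.pi ^ 2)))) := by
  have hlog : Tendsto (fun n : ℕ => Real.log n / n) atTop (𝓝 0) :=
    (Real.isLittleO_log_id_atTop.tendsto_div_nhds_zero).comp tendsto_natCast_atTop_atTop
  have hsum : Tendsto (fun n : ℕ =>
      (∑ k ∈ Finset.Icc 1 (n / 2), (1 - 2 * (k / n : ℝ)) * logCot (k / n)) / n)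
      atTop (𝓝 (7 * (riemannZeta 3).re / (2 * π ^ 2))) := by
    have hup := tendsto_truncated_integral.add hlog
    rw [add_zero] at hup
    refine tendsto_of_tendsto_of_tendsto_of_le_of_le' tendsto_truncated_integral hup ?_ ?_
    · filter_upwards [eventually_ge_atTop 2] with n hn using (riemannSum_sandwich hn).1
    · filter_upwards [eventually_ge_atTop 2] with n hn using (riemannSum_sandwich hn).2
  refine ((Real.continuous_exp.tendsto _).comp hsum).congr' ?_
  filter_upwards [eventually_ge_atTop 2] with n hn
  have hn0 : (0 : ℝ) < n := by positivity
  simp only [Function.comp]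
  rw [Finset.sum_div, Real.exp_sum]
  refine Finset.prod_congr rfl fun k hk => ?_
  rw [Finset.mem_Icc] at hk
  have hk0 : (0 : ℝ) < k := by exact_mod_cast hk.1
  have hkn : (k : ℝ) / n ≤ 1 / 2 := by
    rw [div_le_iff₀ hn0]
    have : k * 2 ≤ n := by omega
    have : (k : ℝ) * 2 ≤ n := by exact_mod_cast this
    linarith
  obtain ⟨hc, hs⟩ := cos_sin_pos (div_pos hk0 hn0) hkn
  have harg : π * k / (2 * n) = π * (k / n) / 2 := by field_simp
  rw [harg, Real.rpow_def_of_pos (by positivity), ← logCot]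
  congr 1
  field_simp
end

section
/- ∫_0^{π/4} (π/4 - x) · ln(cot x) dx = (7/16)·ζ(3). -/
/-!
On `(0, π/2)` the function `log (cot x)` has the Fourier expansion
`2 ∑ cos ((4k+2)x) / (2k+1)`, and the weight `π/4 - x` has the moments
`∫ x in 0..π/4, (π/4 - x) cos ((4k+2)x) = 1 / (4 (2k+1)²)`, with no contribution from the upper
endpoint because `cos ((2k+1)π/2) = 0`. Integrating termwise yields `(1/2) ∑ 1/(2k+1)³ = (1/2)(7/8) ζ(3)`.

The Fourier series converges only conditionally, so the interchange is made by Abel summation.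
For `0 ≤ r < 1`, put `z = r exp(2ix)`; the damped series `∑ 2 r^(2k+1) cos ((4k+2)x) / (2k+1)` is
the real part of `log (1 + z) - log (1 - z)` (`hasSum_abel`), and it is bounded by a geometric
series, so it may be integrated termwise (`integral_abel`). As `r → 1⁻`, the integrals converge by
dominated convergence, since the damped function lies between `0` and `log (cot x)` on `(0, π/4]`
(`abel_le`), and the sums converge by dominated convergence with bound `1/(2(2k+1)³)`.
-/

open scoped Real

/-- The Abel-regularised Fourier series of `log (cot x)`: the odd part of the Taylor series of
`-log (1 - z)` at `z = r exp(2ix)`, in real form via `‖1 ± z‖² = 1 + r² ± 2 r cos (2x)`. -/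
lemma hasSum_abel {r x : ℝ} (hr0 : 0 ≤ r) (hr1 : r < 1) :
    HasSum (fun k : ℕ => 2 * r ^ (2 * k + 1) / (2 * k + 1) * Real.cos ((2 * k + 1) * (2 * x)))
      ((Real.log (1 + r ^ 2 + 2 * r * Real.cos (2 * x)) -
        Real.log (1 + r ^ 2 - 2 * r * Real.cos (2 * x))) / 2) := by
  set z : ℂ := r * Complex.exp ((2 * x : ℝ) * Complex.I) with hz
  have hnz : ‖z‖ < 1 := by
    rw [hz, norm_mul, Complex.norm_exp_ofReal_mul_I, Complex.norm_real, Real.norm_eq_abs,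
      abs_of_nonneg hr0, mul_one]
    exact hr1
  have h1 := Complex.hasSum_taylorSeries_neg_log hnz
  have h2 := Complex.hasSum_taylorSeries_neg_log (z := -z) (by rwa [norm_neg])
  have h3 := h1.sub h2
  have hinj : Function.Injective (fun k : ℕ => 2 * k + 1) := fun a b h => by
    simp only at h; omega
  -- the even terms of the difference cancel, so the sum may be reindexed over odd exponents
  rw [← hinj.hasSum_iff] at h3
  swap
  · intro n hn
    have : Even n := by
      by_contra h
      obtain ⟨k, hk⟩ := Nat.not_even_iff_odd.1 h
      exact hn ⟨k, hk.symm⟩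
    simp [this.neg_pow]
  have h4 := Complex.hasSum_re h3
  have hre : z.re = r * Real.cos (2 * x) := by
    rw [hz, Complex.re_ofReal_mul, Complex.exp_ofReal_mul_I_re]
  have him : z.im = r * Real.sin (2 * x) := by
    rw [hz, Complex.im_ofReal_mul, Complex.exp_ofReal_mul_I_im]
  have hlog : ∀ w : ℂ, Real.log ‖w‖ = Real.log (Complex.normSq w) / 2 := by
    intro w
    rw [Complex.normSq_eq_norm_sq, Real.log_pow]; push_cast; ring
  convert h4 using 1
  · ext k
    have : z ^ (2 * k + 1) = ((r ^ (2 * k + 1) : ℝ) : ℂ) *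
        Complex.exp (((2 * k + 1) * (2 * x) : ℝ) * Complex.I) := by
      rw [hz, mul_pow, ← Complex.exp_nat_mul]
      push_cast
      ring_nf
    have h5 : z ^ (2 * k + 1) / ((2 * k + 1 : ℕ) : ℂ) - (-z) ^ (2 * k + 1) / ((2 * k + 1 : ℕ) : ℂ)
        = ((2 * r ^ (2 * k + 1) / (2 * k + 1) : ℝ) : ℂ) *
        Complex.exp (((2 * k + 1) * (2 * x) : ℝ) * Complex.I) := by
      rw [Odd.neg_pow ⟨k, rfl⟩, this]
      push_cast
      ring
    simp only [Function.comp]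
    rw [h5, Complex.re_ofReal_mul, Complex.exp_ofReal_mul_I_re]
  · rw [Complex.sub_re, Complex.neg_re, Complex.neg_re, Complex.log_re, Complex.log_re, hlog, hlog]
    have hs := Real.sin_sq_add_cos_sq (2 * x)
    have e1 : Complex.normSq (1 - z) = 1 + r ^ 2 - 2 * r * Real.cos (2 * x) := by
      rw [Complex.normSq_apply]
      simp only [Complex.sub_re, Complex.sub_im, Complex.one_re, Complex.one_im, hre, him]
      linear_combination r ^ 2 * hs
    have e2 : Complex.normSq (1 - -z) = 1 + r ^ 2 + 2 * r * Real.cos (2 * x) := by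
      rw [Complex.normSq_apply]
      simp only [Complex.sub_re, Complex.sub_im, Complex.neg_re, Complex.neg_im,
        Complex.one_re, Complex.one_im, hre, him]
      linear_combination r ^ 2 * hs
    rw [e1, e2]; ring

lemma integral_cos_moment (k : ℕ) :
    ∫ x in (0 : ℝ)..(π / 4), (π / 4 - x) * Real.cos ((2 * k + 1) * (2 * x)) =
      1 / (4 * (2 * k + 1) ^ 2) := by
  have hk : (2 * (k : ℝ) + 1) ≠ 0 := by positivity
  have hd : ∀ x ∈ Set.uIcc (0 : ℝ) (π / 4), HasDerivAt
      (fun x : ℝ => (π / 4 - x) * Real.sin ((2 * k + 1) * (2 * x)) / (2 * (2 * k + 1)) -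
        Real.cos ((2 * k + 1) * (2 * x)) / (4 * (2 * k + 1) ^ 2))
      ((π / 4 - x) * Real.cos ((2 * k + 1) * (2 * x))) x := by
    intro x _
    have h0 : HasDerivAt (fun x : ℝ => (2 * (k : ℝ) + 1) * (2 * x)) ((2 * k + 1) * (2 * 1)) x :=
      ((hasDerivAt_id x).const_mul 2).const_mul _
    have h1 := ((((hasDerivAt_id x).const_sub (π / 4)).mul h0.sin).div_const (2 * (2 * k + 1))).sub
      (h0.cos.div_const (4 * (2 * (k : ℝ) + 1) ^ 2))
    refine h1.congr_deriv ?_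
    simp only [id]
    field_simp
    ring
  rw [intervalIntegral.integral_eq_sub_of_hasDerivAt hd
    (Continuous.intervalIntegrable (by fun_prop) _ _)]
  have hc : Real.cos ((2 * k + 1) * (2 * (π / 4))) = 0 := by
    rw [Real.cos_eq_zero_iff]
    exact ⟨k, by push_cast; ring⟩
  simp [hc]

lemma tsum_odd_cubes :
    Summable (fun k : ℕ => 1 / (2 * (k : ℝ) + 1) ^ 3) ∧
    ∑' k : ℕ, 1 / (2 * (k : ℝ) + 1) ^ 3 = 7 / 8 * (riemannZeta 3).re := by
  have hs : Summable (fun n : ℕ => 1 / (n : ℝ) ^ 3) := Real.summable_one_div_nat_pow.2 (by norm_num)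
  have hz : (riemannZeta 3).re = ∑' n : ℕ, 1 / (n : ℝ) ^ 3 := by
    have := zeta_nat_eq_tsum_of_gt_one (k := 3) (by norm_num)
    push_cast at this
    have hcast : riemannZeta 3 = ((∑' n : ℕ, 1 / (n : ℝ) ^ 3 : ℝ) : ℂ) := by
      rw [this, Complex.ofReal_tsum]
      push_cast
      rfl
    rw [hcast, Complex.ofReal_re]
  have he : Summable (fun k : ℕ => 1 / ((2 * k : ℕ) : ℝ) ^ 3) :=
    hs.comp_injective (i := fun k : ℕ => 2 * k) fun a b h => by simp only at h; omega
  have ho : Summable (fun k : ℕ => 1 / ((2 * k + 1 : ℕ) : ℝ) ^ 3) :=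
    hs.comp_injective (i := fun k : ℕ => 2 * k + 1) fun a b h => by simp only at h; omega
  have h := tsum_even_add_odd (f := fun n : ℕ => 1 / (n : ℝ) ^ 3) he ho
  have h8 : ∑' k : ℕ, 1 / ((2 * k : ℕ) : ℝ) ^ 3 = 1 / 8 * ∑' n : ℕ, 1 / (n : ℝ) ^ 3 := by
    rw [← tsum_mul_left]
    congr 1; ext k; push_cast; rw [mul_pow, one_div_mul_one_div]; norm_num
  push_cast at h h8 ho
  refine ⟨ho, ?_⟩
  rw [hz]; linarith

/-- The `r = 1` case of the closed form in `hasSum_abel` is `log (cot x)`. -/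
lemma log_cot_eq {x : ℝ} (hx0 : 0 < x) (hx1 : x < π / 2) :
    Real.log (Real.cos x / Real.sin x) =
      (Real.log (2 + 2 * Real.cos (2 * x)) - Real.log (2 - 2 * Real.cos (2 * x))) / 2 := by
  have hs : 0 < Real.sin x := Real.sin_pos_of_pos_of_lt_pi hx0 (by linarith)
  have hc : 0 < Real.cos x := Real.cos_pos_of_mem_Ioo ⟨by linarith, hx1⟩
  have e1 : 2 + 2 * Real.cos (2 * x) = (2 * Real.cos x) ^ 2 := by rw [Real.cos_two_mul]; ring
  have e2 : 2 - 2 * Real.cos (2 * x) = (2 * Real.sin x) ^ 2 := by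
    rw [Real.cos_two_mul]; linear_combination (-4) * Real.sin_sq_add_cos_sq x
  rw [e1, e2, Real.log_pow, Real.log_pow, Real.log_mul two_ne_zero hc.ne',
    Real.log_mul two_ne_zero hs.ne', Real.log_div hc.ne' hs.ne']
  push_cast; ring

/-- The Abel means are dominated by their limit. After exponentiating, the upper bound is
`(1 + r² + 2rc)(1 - c) ≤ (1 + r² - 2rc)(1 + c)`, that is, `0 ≤ 2c(1 - r)²`. -/
lemma abel_le {r c : ℝ} (hr0 : 0 ≤ r) (hc0 : 0 ≤ c) (hc1 : c < 1) :
    |(Real.log (1 + r ^ 2 + 2 * r * c) - Real.log (1 + r ^ 2 - 2 * r * c)) / 2| ≤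
      (Real.log (2 + 2 * c) - Real.log (2 - 2 * c)) / 2 := by
  have hrc : 0 ≤ r * c := mul_nonneg hr0 hc0
  have hA : 0 < 1 + r ^ 2 - 2 * r * c := by nlinarith [sq_nonneg (1 - r)]
  have hB : 0 < 1 + r ^ 2 + 2 * r * c := by nlinarith
  have h1 : Real.log (1 + r ^ 2 - 2 * r * c) ≤ Real.log (1 + r ^ 2 + 2 * r * c) :=
    Real.log_le_log hA (by linarith)
  have h2 : Real.log ((1 + r ^ 2 + 2 * r * c) * (2 - 2 * c)) ≤
      Real.log ((1 + r ^ 2 - 2 * r * c) * (2 + 2 * c)) :=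
    Real.log_le_log (mul_pos hB (by linarith))
      (by nlinarith [mul_nonneg hc0 (sq_nonneg (1 - r))])
  rw [Real.log_mul hB.ne' (by linarith), Real.log_mul hA.ne' (by linarith)] at h2
  rw [abs_of_nonneg (by linarith)]
  linarith

/-- Termwise integration of the Abel-regularised series; on the right, each term is the coefficient
`2 r^(2k+1) / (2k+1)` times the moment `1 / (4 (2k+1)²)`. -/
lemma integral_abel {r : ℝ} (hr0 : 0 ≤ r) (hr1 : r < 1) :
    ∫ x in (0 : ℝ)..(π / 4), (π / 4 - x) *
      ((Real.log (1 + r ^ 2 + 2 * r * Real.cos (2 * x)) -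
        Real.log (1 + r ^ 2 - 2 * r * Real.cos (2 * x))) / 2) =
      ∑' k : ℕ, r ^ (2 * k + 1) * (1 / 2 * (1 / (2 * k + 1) ^ 3)) := by
  have hpi := Real.pi_pos
  have hgeo : Summable (fun k : ℕ => (π / 4) * (2 * r ^ (2 * k + 1))) :=
    (((summable_geometric_of_lt_one hr0 hr1).comp_injective (i := fun k : ℕ => 2 * k + 1)
      fun a b h => by simp only at h; omega).mul_left 2).mul_left _
  have h := intervalIntegral.hasSum_integral_of_dominated_convergence
    (μ := MeasureTheory.volume) (a := 0) (b := π / 4)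
    (F := fun (k : ℕ) (x : ℝ) => (π / 4 - x) *
      (2 * r ^ (2 * k + 1) / (2 * k + 1) * Real.cos ((2 * k + 1) * (2 * x))))
    (f := fun x => (π / 4 - x) *
      ((Real.log (1 + r ^ 2 + 2 * r * Real.cos (2 * x)) -
        Real.log (1 + r ^ 2 - 2 * r * Real.cos (2 * x))) / 2))
    (fun k _ => (π / 4) * (2 * r ^ (2 * k + 1)))
    (fun k => Continuous.aestronglyMeasurable (by fun_prop))
    (fun k => Filter.Eventually.of_forall fun x hx => by
      rw [Set.uIoc_of_le (by positivity)] at hx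
      rw [norm_mul, norm_mul, Real.norm_eq_abs, Real.norm_eq_abs, Real.norm_eq_abs,
        abs_of_nonneg (by linarith [hx.2]), abs_of_nonneg (by positivity)]
      have h1 : 2 * r ^ (2 * k + 1) / (2 * k + 1) ≤ 2 * r ^ (2 * k + 1) :=
        div_le_self (by positivity) (by linarith [Nat.cast_nonneg (α := ℝ) k])
      have h2 := mul_le_mul h1 (Real.abs_cos_le_one ((2 * k + 1) * (2 * x))) (abs_nonneg _)
        (by positivity)
      rw [mul_one] at h2
      exact mul_le_mul (by linarith [hx.1]) h2 (by positivity) (by positivity))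
    (Filter.Eventually.of_forall fun x _ => hgeo)
    (by simp)
    (Filter.Eventually.of_forall fun x _ => (hasSum_abel hr0 hr1).mul_left _)
  rw [← h.tsum_eq]
  congr 1; ext k
  have : ∀ x : ℝ, (π / 4 - x) *
      (2 * r ^ (2 * k + 1) / (2 * k + 1) * Real.cos ((2 * k + 1) * (2 * x))) =
      2 * r ^ (2 * k + 1) / (2 * k + 1) * ((π / 4 - x) * Real.cos ((2 * k + 1) * (2 * x))) :=
    fun x => by ring
  simp only [this]
  rw [intervalIntegral.integral_const_mul, integral_cos_moment]
  field_simp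
  ring

/-- The dominating function for the limit `r → 1⁻` is integrable. -/
lemma intervalIntegrable_log_cot :
    IntervalIntegrable (fun x => (π / 4) * Real.log (Real.cos x / Real.sin x))
      MeasureTheory.volume 0 (π / 4) := by
  apply IntervalIntegrable.const_mul
  apply MeromorphicOn.intervalIntegrable_log
  intro x _
  exact (Real.analyticAt_cos.meromorphicAt).div Real.analyticAt_sin.meromorphicAt

/-- `∫_0^{π/4} (π/4 - x)·ln(cot x) dx = (7/16)·ζ(3)`. -/
theorem integral_quarter_pi_mul_log_cot :
    ∫ x in (0 : ℝ)..(Real.pi / 4),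
        (Real.pi / 4 - x) * Real.log (Real.cos x / Real.sin x) =
      7 / 16 * (riemannZeta 3).re := by
  have hpi := Real.pi_pos
  obtain ⟨hsum, htsum⟩ := tsum_odd_cubes
  have hev : ∀ᶠ r : ℝ in nhdsWithin 1 (Set.Iio 1), 0 ≤ r ∧ r < 1 := by
    filter_upwards [Ioo_mem_nhdsLT (show (0 : ℝ) < 1 by norm_num)] with r hr
    exact ⟨hr.1.le, hr.2⟩
  have hL : Filter.Tendsto (fun r : ℝ => ∫ x in (0 : ℝ)..(π / 4), (π / 4 - x) *
      ((Real.log (1 + r ^ 2 + 2 * r * Real.cos (2 * x)) -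
        Real.log (1 + r ^ 2 - 2 * r * Real.cos (2 * x))) / 2)) (nhdsWithin 1 (Set.Iio 1))
      (nhds (∫ x in (0 : ℝ)..(π / 4), (π / 4 - x) * Real.log (Real.cos x / Real.sin x))) := by
    have hcos : ∀ x ∈ Set.uIoc 0 (π / 4), 0 < x ∧ x ≤ π / 4 ∧ 0 ≤ Real.cos (2 * x) ∧
        Real.cos (2 * x) < 1 := by
      intro x hx
      rw [Set.uIoc_of_le (by positivity)] at hx
      refine ⟨hx.1, hx.2, Real.cos_nonneg_of_mem_Icc ⟨by linarith [hx.1], by linarith [hx.2]⟩, ?_⟩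
      have := Real.cos_lt_cos_of_nonneg_of_le_pi le_rfl (y := 2 * x) (by linarith [hx.2])
        (by linarith [hx.1])
      rwa [Real.cos_zero] at this
    refine intervalIntegral.tendsto_integral_filter_of_dominated_convergence _ ?_ ?_
      intervalIntegrable_log_cot ?_
    · exact Filter.Eventually.of_forall fun r => Measurable.aestronglyMeasurable (by fun_prop)
    · filter_upwards [hev] with r hr
      refine Filter.Eventually.of_forall fun x hx => ?_
      obtain ⟨h0, h1, hc0, hc1⟩ := hcos x hx
      rw [norm_mul, Real.norm_eq_abs, Real.norm_eq_abs, abs_of_nonneg (by linarith),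
        log_cot_eq h0 (by linarith)]
      exact mul_le_mul (by linarith) (abel_le hr.1 hc0 hc1) (abs_nonneg _) (by positivity)
    · refine Filter.Eventually.of_forall fun x hx => ?_
      obtain ⟨h0, h1, hc0, hc1⟩ := hcos x hx
      rw [log_cot_eq h0 (by linarith)]
      refine tendsto_nhdsWithin_of_tendsto_nhds ?_
      have hcont : ContinuousAt (fun r : ℝ => (π / 4 - x) *
          ((Real.log (1 + r ^ 2 + 2 * r * Real.cos (2 * x)) -
          Real.log (1 + r ^ 2 - 2 * r * Real.cos (2 * x))) / 2)) 1 := by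
        refine continuousAt_const.mul (ContinuousAt.div_const (ContinuousAt.sub ?_ ?_) _)
        · exact ContinuousAt.log (by fun_prop) (by nlinarith)
        · exact ContinuousAt.log (by fun_prop) (by nlinarith)
      convert hcont.tendsto using 2
      norm_num
  have hR : Filter.Tendsto
      (fun r : ℝ => ∑' k : ℕ, r ^ (2 * k + 1) * (1 / 2 * (1 / (2 * (k : ℝ) + 1) ^ 3)))
      (nhdsWithin 1 (Set.Iio 1)) (nhds (∑' k : ℕ, 1 / 2 * (1 / (2 * (k : ℝ) + 1) ^ 3))) := by
    refine tendsto_tsum_of_dominated_convergence (hsum.mul_left (1 / 2)) ?_ ?_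
    · intro k
      refine tendsto_nhdsWithin_of_tendsto_nhds ?_
      have hcont : ContinuousAt (fun r : ℝ =>
        r ^ (2 * k + 1) * (1 / 2 * (1 / (2 * (k : ℝ) + 1) ^ 3))) 1 := by fun_prop
      convert hcont.tendsto using 2
      simp
    · filter_upwards [hev] with r hr k
      have hr0 := hr.1
      rw [Real.norm_eq_abs, abs_of_nonneg (by positivity)]
      exact mul_le_of_le_one_left (by positivity) (pow_le_one₀ hr.1 hr.2.le)
  have hEq := tendsto_nhds_unique (hL.congr' (hev.mono fun r hr => integral_abel hr.1 hr.2)) hR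
  rw [hEq, tsum_mul_left, htsum]
  ring
end

section
/- Let x₁, x₂, x₃, x₄ be the vertices, listed in cyclic order, of a strictly convex quadrilateral in the Euclidean plane, and write r_{i,j} = dist(x_i, x_j) (with r_{i,j} = r_{j,i}). Then ∑_{σ ∈ S₄} r_{σ(1),σ(4)}·((r_{σ(2),σ(4)} + r_{σ(3),σ(4)})² - r_{σ(2),σ(3)}²)·d₃(r_{σ(1),σ(2)}, r_{σ(1),σ(3)}, r_{σ(2),σ(3)}) ≥ 8·d₃(r_{1,2}·r_{3,4}, r_{1,3}·r_{2,4}, r_{1,4}·r_{2,3}), where the sum is over all 24 permutations σ of {1, 2, 3, 4}. (For coplanar points this inequality is equivalent to the Atiyah–Sutcliffe conjecture |D(x₁, x₂, x₃, x₄)| ≥ 1; hence the second Atiyah–Sutcliffe conjecture holds for vertices of a convex quadrilateral.) -/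
/-!
Write `a, b, c, d` for the sides `x₁x₂, x₂x₃, x₃x₄, x₄x₁` and `e, f` for the diagonals `x₁x₃, x₂x₄`.
As the diagonals meet, `e + f ≥ a + c` and `e + f ≥ b + d`, and so the four-point metric splits: with
`2A = e + f - b - d`, `2B = e + f - a - c` and Gromov products such as `2w₁ = a + d - f`,
`a = w₁ + w₂ + A`, `b = w₂ + w₃ + B`, `c = w₃ + w₄ + A`, `d = w₁ + w₄ + B`,
`e = w₁ + w₃ + A + B`, `f = w₂ + w₄ + A + B`, where all six parameters are nonnegative.
In these parameters, the difference of the two sides of the inequality is a sextic form whose only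
negative terms are `-64 wᵢ² wⱼ² wₖ²`, one for each triple of vertices.

Those terms are absorbed by planarity. The diagonal through a vertex cuts its angle, which is at most
`π`, into two parts, so one of them is at most `π / 2` (`acute_part`). By the law of cosines this
bounds `wᵢ² wⱼ² wₖ²` by a form in the six parameters (`vertex_bound`), and after
substitution of the four bounds, all the coefficients are nonnegative (`split_metric_bound`).
-/

/-- `d₃(a,b,c) = (a+b-c)(a+c-b)(b+c-a)`. -/
def d3 (a b c : ℝ) : ℝ := (a + b - c) * (a + c - b) * (b + c - a)

/-- A strictly convex quadrilateral `x₁x₂x₃x₄` in the plane: no three vertices are collinear,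
each vertex lies outside the convex hull of the other three, and the vertices are listed in
cyclic order (equivalently, the diagonals `x₁x₃` and `x₂x₄` meet). -/
def IsStrictConvexQuad (x₁ x₂ x₃ x₄ : EuclideanSpace ℝ (Fin 2)) : Prop :=
  ¬ Collinear ℝ ({x₁, x₂, x₃} : Set (EuclideanSpace ℝ (Fin 2))) ∧
  ¬ Collinear ℝ ({x₁, x₂, x₄} : Set (EuclideanSpace ℝ (Fin 2))) ∧
  ¬ Collinear ℝ ({x₁, x₃, x₄} : Set (EuclideanSpace ℝ (Fin 2))) ∧
  ¬ Collinear ℝ ({x₂, x₃, x₄} : Set (EuclideanSpace ℝ (Fin 2))) ∧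
  x₁ ∉ convexHull ℝ ({x₂, x₃, x₄} : Set (EuclideanSpace ℝ (Fin 2))) ∧
  x₂ ∉ convexHull ℝ ({x₁, x₃, x₄} : Set (EuclideanSpace ℝ (Fin 2))) ∧
  x₃ ∉ convexHull ℝ ({x₁, x₂, x₄} : Set (EuclideanSpace ℝ (Fin 2))) ∧
  x₄ ∉ convexHull ℝ ({x₁, x₂, x₃} : Set (EuclideanSpace ℝ (Fin 2))) ∧
  (segment ℝ x₁ x₃ ∩ segment ℝ x₂ x₄).Nonempty

open Equiv in
/-- The sum over `S₄`, grouped by the value `σ 0` and then by `σ 1`, `σ 2`. -/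
lemma sum_perm_four (F : Fin 4 → Fin 4 → Fin 4 → Fin 4 → ℝ) :
    ∑ σ : Perm (Fin 4), F (σ 0) (σ 1) (σ 2) (σ 3) =
      F 0 1 2 3 + F 0 1 3 2 + F 0 2 1 3 + F 0 2 3 1 + F 0 3 1 2 + F 0 3 2 1 +
      F 1 0 2 3 + F 1 0 3 2 + F 1 2 0 3 + F 1 2 3 0 + F 1 3 0 2 + F 1 3 2 0 +
      F 2 0 1 3 + F 2 0 3 1 + F 2 1 0 3 + F 2 1 3 0 + F 2 3 0 1 + F 2 3 1 0 +
      F 3 0 1 2 + F 3 0 2 1 + F 3 1 0 2 + F 3 1 2 0 + F 3 2 0 1 + F 3 2 1 0 := by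
  have hu : (Finset.univ : Finset (Perm (Fin 4))).val.map (fun σ => (σ 0, σ 1, σ 2, σ 3)) =
      {(0, 1, 2, 3), (0, 1, 3, 2), (0, 2, 1, 3), (0, 2, 3, 1), (0, 3, 1, 2), (0, 3, 2, 1),
       (1, 0, 2, 3), (1, 0, 3, 2), (1, 2, 0, 3), (1, 2, 3, 0), (1, 3, 0, 2), (1, 3, 2, 0),
       (2, 0, 1, 3), (2, 0, 3, 1), (2, 1, 0, 3), (2, 1, 3, 0), (2, 3, 0, 1), (2, 3, 1, 0),
       (3, 0, 1, 2), (3, 0, 2, 1), (3, 1, 0, 2), (3, 1, 2, 0), (3, 2, 0, 1), (3, 2, 1, 0)} := by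
    decide +kernel
  have h := congrArg (fun s => (s.map fun t : Fin 4 × Fin 4 × Fin 4 × Fin 4 =>
    F t.1 t.2.1 t.2.2.1 t.2.2.2).sum) hu
  simp only [Multiset.map_map, Function.comp_def] at h
  rw [Finset.sum_eq_multiset_sum, h]
  simp
  ring

/-- If the diagonals `ac` and `bo` of a quadrilateral meet, then one of the two angles `aob`, `boc`
is at most a right angle. -/
lemma acute_part {V : Type*} [NormedAddCommGroup V] [InnerProductSpace ℝ V] {o a b c p : V}
    (hac : p ∈ segment ℝ a c) (hbo : p ∈ segment ℝ o b) :
    dist a b ^ 2 ≤ dist o a ^ 2 + dist o b ^ 2 ∨ dist c b ^ 2 ≤ dist o c ^ 2 + dist o b ^ 2 := by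
  obtain ⟨s, t, hs, ht, hst, rfl⟩ := hac
  obtain ⟨u, v, hu, hv, huv, hp⟩ := hbo
  have key : s * inner ℝ (a - o) (b - o) + t * inner ℝ (c - o) (b - o) =
      v * ‖b - o‖ ^ 2 := by
    rw [← real_inner_self_eq_norm_sq, ← real_inner_smul_left, ← real_inner_smul_left,
      ← real_inner_smul_left, ← inner_add_left]
    congr 1
    have e1 : s • (a - o) + t • (c - o) = (s • a + t • c) - (s + t) • o := by module
    have e2 : v • (b - o) = (u • o + v • b) - (u + v) • o := by module
    rw [e1, e2, hp, hst, huv]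
  have cosine (y : V) :
      dist y b ^ 2 = dist o y ^ 2 + dist o b ^ 2 - 2 * inner ℝ (y - o) (b - o) := by
    rw [dist_comm o y, dist_comm o b, dist_eq_norm, dist_eq_norm, dist_eq_norm,
      show y - b = (y - o) - (b - o) by abel, norm_sub_sq_real]
    ring
  rw [cosine a, cosine c]
  by_contra! hneg
  obtain ⟨h1, h2⟩ := hneg
  have h3 : 0 ≤ v * ‖b - o‖ ^ 2 := by positivity
  obtain rfl : t = 1 - s := by linarith
  rcases hs.eq_or_lt with rfl | hs'
  · nlinarith
  · nlinarith [mul_pos hs' (show 0 < -inner ℝ (a - o) (b - o) by linarith),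
      mul_nonneg ht (show 0 ≤ -inner ℝ (c - o) (b - o) by linarith)]

/-- If the segments `ac` and `bd` meet at `p`, then `ab + cd ≤ ac + bd`: add the triangle
inequalities of `apb` and `cpd`. -/
lemma sides_le_diagonals {V : Type*} [NormedAddCommGroup V] [NormedSpace ℝ V] {a b c d p : V}
    (hac : p ∈ segment ℝ a c) (hbd : p ∈ segment ℝ b d) :
    dist a b + dist c d ≤ dist a c + dist b d := by
  have h1 := dist_add_dist_of_mem_segment hac
  have h2 := dist_add_dist_of_mem_segment hbd
  have h3 := dist_triangle a p b
  have h4 := dist_triangle c p d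
  rw [dist_comm p b] at h3
  rw [dist_comm c p] at h4
  linarith

/-- The planarity bound at a vertex with parameter `i`: its neighbours `p`, `q` are at distances
`i + p + A` and `i + q + B`, and its opposite vertex `o` at distance `i + o + A + B`. -/
lemma vertex_bound {i p q o A B : ℝ} (hi : 0 ≤ i) (hp : 0 ≤ p) (hq : 0 ≤ q) (ho : 0 ≤ o)
    (hA : 0 ≤ A) (hB : 0 ≤ B)
    (h : (q + o + A) ^ 2 ≤ (i + q + B) ^ 2 + (i + o + A + B) ^ 2 ∨
      (p + o + B) ^ 2 ≤ (i + p + A) ^ 2 + (i + o + A + B) ^ 2) :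
    0 ≤ p * q * o * (p * ((i + B) * (q + o + i + A + B)) + q * ((i + A) * (p + o + i + A + B))
      - p * q * o) := by
  apply mul_nonneg (by positivity)
  have hX : 0 ≤ (i + B) * (q + o + i + A + B) := by positivity
  have hY : 0 ≤ (i + A) * (p + o + i + A + B) := by positivity
  rcases h with h | h
  · have h1 : q * o ≤ (i + B) * (q + o + i + A + B) := by
      have := mul_nonneg hq hA
      linarith
    nlinarith [mul_le_mul_of_nonneg_left h1 hp, mul_nonneg hq hY]
  · have h1 : p * o ≤ (i + A) * (p + o + i + A + B) := by
      have := mul_nonneg hp hB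
      linarith
    nlinarith [mul_le_mul_of_nonneg_left h1 hq, mul_nonneg hp hX]

set_option maxRecDepth 100000 in
set_option maxHeartbeats 2000000 in
/-- The inequality for a four-point metric in split form whose angles are cut by the diagonals as in
the plane. On the left, each vertex is paired with the triangle of the other three; the factor `2`
counts the permutations that differ by exchanging `σ 1` and `σ 2`. -/
lemma split_metric_bound {a b c d e f w₁ w₂ w₃ w₄ A B : ℝ}
    (h1 : 0 ≤ w₁) (h2 : 0 ≤ w₂) (h3 : 0 ≤ w₃) (h4 : 0 ≤ w₄) (hA : 0 ≤ A) (hB : 0 ≤ B)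
    (ha : a = w₁ + w₂ + A) (hb : b = w₂ + w₃ + B) (hc : c = w₃ + w₄ + A) (hd : d = w₁ + w₄ + B)
    (he : e = w₁ + w₃ + A + B) (hf : f = w₂ + w₄ + A + B)
    (v1 : c ^ 2 ≤ d ^ 2 + e ^ 2 ∨ b ^ 2 ≤ a ^ 2 + e ^ 2)
    (v2 : d ^ 2 ≤ a ^ 2 + f ^ 2 ∨ c ^ 2 ≤ b ^ 2 + f ^ 2)
    (v3 : a ^ 2 ≤ b ^ 2 + e ^ 2 ∨ d ^ 2 ≤ c ^ 2 + e ^ 2)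
    (v4 : a ^ 2 ≤ d ^ 2 + f ^ 2 ∨ b ^ 2 ≤ c ^ 2 + f ^ 2) :
    8 * d3 (a * c) (e * f) (d * b) ≤ 2 * (
      d3 b f c * (a * ((e + d) ^ 2 - c ^ 2) + e * ((a + d) ^ 2 - f ^ 2) +
        d * ((a + e) ^ 2 - b ^ 2)) +
      d3 e d c * (a * ((b + f) ^ 2 - c ^ 2) + b * ((a + f) ^ 2 - d ^ 2) +
        f * ((a + b) ^ 2 - e ^ 2)) +
      d3 a d f * (e * ((b + c) ^ 2 - f ^ 2) + b * ((e + c) ^ 2 - d ^ 2) +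
        c * ((e + b) ^ 2 - a ^ 2)) +
      d3 a e b * (d * ((f + c) ^ 2 - b ^ 2) + f * ((d + c) ^ 2 - e ^ 2) +
        c * ((d + f) ^ 2 - a ^ 2))) := by
  have k1 := vertex_bound (i := w₁) (p := w₂) (q := w₄) (o := w₃) h1 h2 h4 h3 hA hB (by
    convert v1 using 3 <;> simp only [*] <;> ring)
  have k2 := vertex_bound (i := w₂) (p := w₁) (q := w₃) (o := w₄) h2 h1 h3 h4 hA hB (by
    convert v2.symm using 3 <;> simp only [*] <;> ring)
  have k3 := vertex_bound (i := w₃) (p := w₄) (q := w₂) (o := w₁) h3 h4 h2 h1 hA hB (by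
    convert v3 using 3 <;> simp only [*] <;> ring)
  have k4 := vertex_bound (i := w₄) (p := w₃) (q := w₁) (o := w₂) h4 h3 h1 h2 hA hB (by
    convert v4 using 3 <;> simp only [*] <;> ring)
  clear v1 v2 v3 v4
  subst ha hb hc hd he hf
  rw [← sub_nonneg]
  refine le_trans (mul_nonneg (by norm_num : (0 : ℝ) ≤ 64)
    (add_nonneg (add_nonneg k1 k2) (add_nonneg k3 k4))) ?_
  clear k1 k2 k3 k4
  rw [← sub_nonneg]
  unfold d3
  -- every coefficient of the remaining form is positive
  ring_nf
  positivity

/-- For the vertices of a strictly convex quadrilateral,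
`∑_{σ ∈ S₄} r_{σ1,σ4}·((r_{σ2,σ4} + r_{σ3,σ4})² - r_{σ2,σ3}²)·d₃(r_{σ1,σ2}, r_{σ1,σ3}, r_{σ2,σ3})
  ≥ 8·d₃(r₁₂·r₃₄, r₁₃·r₂₄, r₁₄·r₂₃)`;
for coplanar points this is equivalent to the second Atiyah–Sutcliffe conjecture
`|D(x₁,x₂,x₃,x₄)| ≥ 1`. -/
theorem convex_quad_atiyah_sutcliffe_two (x : Fin 4 → EuclideanSpace ℝ (Fin 2))
    (h : IsStrictConvexQuad (x 0) (x 1) (x 2) (x 3)) :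
    ∑ σ : Equiv.Perm (Fin 4),
        dist (x (σ 0)) (x (σ 3)) *
          ((dist (x (σ 1)) (x (σ 3)) + dist (x (σ 2)) (x (σ 3))) ^ 2 -
            dist (x (σ 1)) (x (σ 2)) ^ 2) *
          d3 (dist (x (σ 0)) (x (σ 1))) (dist (x (σ 0)) (x (σ 2))) (dist (x (σ 1)) (x (σ 2))) ≥
      8 * d3 (dist (x 0) (x 1) * dist (x 2) (x 3)) (dist (x 0) (x 2) * dist (x 1) (x 3))
        (dist (x 0) (x 3) * dist (x 1) (x 2)) := by
  obtain ⟨-, -, -, -, -, -, -, -, p, hp, hq⟩ := h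
  have hp' := segment_symm ℝ (x 0) (x 2) ▸ hp
  have hq' := segment_symm ℝ (x 1) (x 3) ▸ hq
  have v1 := acute_part hq' hp
  have v2 := acute_part hp hq
  have v3 := acute_part hq hp'
  have v4 := acute_part hp hq'
  have s1 := sides_le_diagonals hp hq
  have s2 := sides_le_diagonals hp hq'
  have t1 := dist_triangle (x 1) (x 0) (x 3)
  have t2 := dist_triangle (x 0) (x 1) (x 2)
  have t3 := dist_triangle (x 1) (x 2) (x 3)
  have t4 := dist_triangle (x 0) (x 3) (x 2)
  rw [sum_perm_four (fun i j k l => dist (x i) (x l) *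
    ((dist (x j) (x l) + dist (x k) (x l)) ^ 2 - dist (x j) (x k) ^ 2) *
    d3 (dist (x i) (x j)) (dist (x i) (x k)) (dist (x j) (x k)))]
  have c10 := dist_comm (x 1) (x 0)
  have c20 := dist_comm (x 2) (x 0)
  have c30 := dist_comm (x 3) (x 0)
  have c21 := dist_comm (x 2) (x 1)
  have c31 := dist_comm (x 3) (x 1)
  have c32 := dist_comm (x 3) (x 2)
  simp only [c10, c20, c30, c21, c31, c32] at v1 v2 v3 v4 s1 s2 t1 t2 t3 t4 ⊢
  clear c10 c20 c30 c21 c31 c32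
  generalize dist (x 0) (x 1) = a at v1 v2 v3 v4 s1 s2 t1 t2 t3 t4 ⊢
  generalize dist (x 1) (x 2) = b at v1 v2 v3 v4 s1 s2 t1 t2 t3 t4 ⊢
  generalize dist (x 2) (x 3) = c at v1 v2 v3 v4 s1 s2 t1 t2 t3 t4 ⊢
  generalize dist (x 0) (x 3) = d at v1 v2 v3 v4 s1 s2 t1 t2 t3 t4 ⊢
  generalize dist (x 0) (x 2) = e at v1 v2 v3 v4 s1 s2 t1 t2 t3 t4 ⊢
  generalize dist (x 1) (x 3) = f at v1 v2 v3 v4 s1 s2 t1 t2 t3 t4 ⊢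
  have key := split_metric_bound (a := a) (b := b) (c := c) (d := d) (e := e) (f := f)
    (w₁ := (a + d - f) / 2) (w₂ := (a + b - e) / 2) (w₃ := (b + c - f) / 2)
    (w₄ := (c + d - e) / 2) (A := (e + f - b - d) / 2) (B := (e + f - a - c) / 2)
    (by linarith) (by linarith) (by linarith) (by linarith) (by linarith) (by linarith)
    (by ring) (by ring) (by ring) (by ring) (by ring) (by ring) v1 v2 v3 v4
  refine ge_trans (le_of_eq ?_) key
  unfold d3
  ring
end

section
/- Let x₁, x₂, x₃, x₄ be four distinct points lying on a circle in the Euclidean plane, listed in cyclic order around the circle, and write r_{i,j} = dist(x_i, x_j) (with r_{i,j} = r_{j,i}). Then (64·∏_{1 ≤ i < j ≤ 4} r_{i,j} + (1/2)·∑_{σ ∈ S₄} r_{σ(1),σ(4)}·((r_{σ(2),σ(4)} + r_{σ(3),σ(4)})² - r_{σ(2),σ(3)}²)·d₃(r_{σ(1),σ(2)}, r_{σ(1),σ(3)}, r_{σ(2),σ(3)}))² ≥ ∏_{l=1}^{4} (d₃(r_{i,j}, r_{j,k}, r_{i,k}) + 8·r_{i,j}·r_{j,k}·r_{i,k}), where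 in the product on the right, for each l the indices i, j, k are the three elements of {1, 2, 3, 4} \ {l}, and the sum is over all 24 permutations σ of {1, 2, 3, 4}. (This inequality is the third Atiyah–Sutcliffe conjecture |D(x₁,…,x₄)|² ≥ ∏_l |D(x_i, x_j, x_k)| for the vertices of an inscribed quadrilateral.) -/
/-! ### The inequality in terms of cosines -/

/-- AM-GM for the four factors `8 + ρ_l`, combined with the lower bounds `2 + ρ_l / 2` for the
sums of `1 + cos θ` over the angles at the vertex `l`. -/
lemma final_ineq (u v w z eu ev ew ez : ℝ) (hu : 0 ≤ u) (hv : 0 ≤ v) (hw : 0 ≤ w) (hz : 0 ≤ z)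
    (heu : 2 + u / 2 ≤ eu) (hev : 2 + v / 2 ≤ ev) (hew : 2 + w / 2 ≤ ew) (hez : 2 + z / 2 ≤ ez) :
    (8 + u) * (8 + v) * (8 + w) * (8 + z) ≤
      (64 + 2 * (u * eu + v * ev + w * ew + z * ez)) ^ 2 := by
  have h1 : (8 + u) * (8 + v) ≤ ((16 + u + v) / 2) ^ 2 := by nlinarith [sq_nonneg (u - v)]
  have h2 : (8 + w) * (8 + z) ≤ ((16 + w + z) / 2) ^ 2 := by nlinarith [sq_nonneg (w - z)]
  have h3 : (16 + u + v) / 2 * ((16 + w + z) / 2) ≤ (8 + (u + v + w + z) / 4) ^ 2 := by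
    nlinarith [sq_nonneg (u + v - w - z)]
  have h4 : (8 + (u + v + w + z) / 4) ^ 2 ≤
      64 + 2 * (u * eu + v * ev + w * ew + z * ez) := by
    nlinarith [mul_le_mul_of_nonneg_left heu hu, mul_le_mul_of_nonneg_left hev hv,
      mul_le_mul_of_nonneg_left hew hw, mul_le_mul_of_nonneg_left hez hz,
      sq_nonneg (u - v), sq_nonneg (u - w), sq_nonneg (u - z), sq_nonneg (v - w),
      sq_nonneg (v - z), sq_nonneg (w - z), sq_nonneg (u + v + w + z)]
  calc (8 + u) * (8 + v) * (8 + w) * (8 + z) = (8 + u) * (8 + v) * ((8 + w) * (8 + z)) := by ring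
    _ ≤ ((16 + u + v) / 2) ^ 2 * ((16 + w + z) / 2) ^ 2 := by gcongr
    _ = ((16 + u + v) / 2 * ((16 + w + z) / 2)) ^ 2 := by ring
    _ ≤ _ := by
      have : 0 ≤ (16 + u + v) / 2 * ((16 + w + z) / 2) := by positivity
      exact pow_le_pow_left₀ this (h3.trans h4) 2

/-- In a triangle with sides `a, b, c` and cosines `ca, cb, cc` of the opposite angles,
`d₃(a,b,c) = 2abc (ca + cb + cc - 1)`. -/
lemma d3_eq_cos {a b c ca cb cc : ℝ} (ha : a ^ 2 = b ^ 2 + c ^ 2 - 2 * b * c * ca)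
    (hb : b ^ 2 = a ^ 2 + c ^ 2 - 2 * a * c * cb) (hc : c ^ 2 = a ^ 2 + b ^ 2 - 2 * a * b * cc) :
    d3 a b c = a * b * c * (2 * (ca + cb + cc - 1)) := by
  unfold d3
  linear_combination (-a) * ha - b * hb - c * hc

lemma d3_nonneg {a b c : ℝ} (h1 : c ≤ a + b) (h2 : b ≤ a + c) (h3 : a ≤ b + c) :
    0 ≤ d3 a b c :=
  mul_nonneg (mul_nonneg (by linarith) (by linarith)) (by linarith)

/-- One summand of the sum over `S₄`: here `g, h` are the sides at the vertex `l` enclosing an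
angle with cosine `t`, `k` is the opposite side, and `m, n, k` is the triangle omitting `l`. -/
lemma term_eq {e g h k m n t ρ : ℝ} (ht : k ^ 2 = g ^ 2 + h ^ 2 - 2 * g * h * t)
    (hd : d3 m n k = m * n * k * ρ) :
    e * ((g + h) ^ 2 - k ^ 2) * d3 m n k = 2 * (e * g * h * m * n * k) * ρ * (1 + t) := by
  rw [hd]
  linear_combination (-(e * (m * n * k * ρ))) * ht

lemma neg_one_le_cos {a b p t : ℝ} (ha : 0 < a) (hb : 0 < b) (hp : 0 < p)
    (h : p ^ 2 = a ^ 2 + b ^ 2 - 2 * a * b * t) (htri : p ≤ a + b) : -1 ≤ t := by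
  have hab := mul_pos ha hb
  by_contra! hc
  nlinarith

lemma nonneg_of_d3 {a b c ρ : ℝ} (ha : 0 < a) (hb : 0 < b) (hc : 0 < c)
    (h : d3 a b c = a * b * c * ρ)
    (h1 : c ≤ a + b) (h2 : b ≤ a + c) (h3 : a ≤ b + c) : 0 ≤ ρ := by
  have := d3_nonneg h1 h2 h3
  rw [h] at this
  exact nonneg_of_mul_nonneg_right this (by positivity)

lemma d3_swap (a b c : ℝ) : d3 a b c = d3 b a c := by unfold d3; ring

lemma d3_swap' (a b c : ℝ) : d3 a b c = d3 a c b := by unfold d3; ring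

lemma d3_rev (a b c : ℝ) : d3 a b c = d3 c b a := by unfold d3; ring

/-! ### The sum over permutations -/

/-- A sum over `S₄` written out, grouped by the value of `σ 3`, for a summand symmetric in `σ 1, σ 2`. -/
lemma sum_perm_four_s17 (f : Fin 4 → Fin 4 → Fin 4 → Fin 4 → ℝ)
    (hf : ∀ i j k l, f i j k l = f i k j l) :
    ∑ σ : Equiv.Perm (Fin 4), f (σ 0) (σ 1) (σ 2) (σ 3) =
      2 * ((f 1 2 3 0 + f 2 1 3 0 + f 3 1 2 0) +
      (f 0 2 3 1 + f 2 0 3 1 + f 3 0 2 1) +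
      (f 0 1 3 2 + f 1 0 3 2 + f 3 0 1 2) +
      (f 0 1 2 3 + f 1 0 2 3 + f 2 0 1 3)) := by
  -- The quadruples `(σ 0, σ 1, σ 2, σ 3)` are those with distinct entries.
  have h : ∀ g : Fin 4 × Fin 4 × Fin 4 × Fin 4 → ℝ,
      ∑ σ : Equiv.Perm (Fin 4), g (σ 0, σ 1, σ 2, σ 3) =
        ∑ t : Fin 4 × Fin 4 × Fin 4 × Fin 4 with t.1 ≠ t.2.1 ∧ t.1 ≠ t.2.2.1 ∧
          t.1 ≠ t.2.2.2 ∧ t.2.1 ≠ t.2.2.1 ∧ t.2.1 ≠ t.2.2.2 ∧ t.2.2.1 ≠ t.2.2.2, g t := by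
    intro g
    rw [← Finset.sum_image (f := g)
      (g := fun σ : Equiv.Perm (Fin 4) => (σ 0, σ 1, σ 2, σ 3)) (s := Finset.univ)]
    · congr 1
      decide +kernel
    · decide +kernel
  rw [h fun t => f t.1 t.2.1 t.2.2.1 t.2.2.2, Finset.sum_filter]
  simp only [Fintype.sum_prod_type, Fin.sum_univ_four]
  simp
  linarith [hf 0 1 2 3, hf 0 1 3 2, hf 0 2 3 1, hf 1 0 2 3, hf 1 0 3 2, hf 1 2 3 0,
    hf 2 0 1 3, hf 2 0 3 1, hf 2 1 3 0, hf 3 0 1 2, hf 3 0 2 1, hf 3 1 2 0]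

/-! ### Assembling the six lengths -/

/-- The inequality for six lengths satisfying the twelve laws of cosines of an inscribed
quadrilateral with sides `a = r₀₁, b = r₁₂, c = r₂₃, d = r₀₃` and diagonals `p = r₀₂, q = r₁₃`.
Here `ta, tb, tc, td` are the cosines
of the angles subtended by the sides; `tp` is the cosine of the angle between `a` and `b` (so the
angle between `c` and `d` has cosine `-tp`), and `tq` that of the angle between `a` and `d`. -/
lemma ineq_of_cosines {a b c d p q ta tb tc td tp tq : ℝ}
    (ha : 0 < a) (hb : 0 < b) (hc : 0 < c) (hd : 0 < d) (hp : 0 < p) (hq : 0 < q)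
    (tri : (p ≤ a + b ∧ b ≤ a + p ∧ a ≤ b + p) ∧ (q ≤ b + c ∧ c ≤ b + q ∧ b ≤ c + q) ∧
      (d ≤ p + c ∧ c ≤ p + d ∧ p ≤ c + d) ∧ (d ≤ a + q ∧ q ≤ a + d ∧ a ≤ q + d))
    (ha2 : a ^ 2 = b ^ 2 + p ^ 2 - 2 * b * p * ta) (ha3 : a ^ 2 = d ^ 2 + q ^ 2 - 2 * d * q * ta)
    (hb0 : b ^ 2 = a ^ 2 + p ^ 2 - 2 * a * p * tb) (hb3 : b ^ 2 = c ^ 2 + q ^ 2 - 2 * c * q * tb)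
    (hc0 : c ^ 2 = d ^ 2 + p ^ 2 - 2 * d * p * tc) (hc1 : c ^ 2 = b ^ 2 + q ^ 2 - 2 * b * q * tc)
    (hd1 : d ^ 2 = a ^ 2 + q ^ 2 - 2 * a * q * td) (hd2 : d ^ 2 = c ^ 2 + p ^ 2 - 2 * c * p * td)
    (hp1 : p ^ 2 = a ^ 2 + b ^ 2 - 2 * a * b * tp) (hp3 : p ^ 2 = c ^ 2 + d ^ 2 - 2 * c * d * (-tp))
    (hq0 : q ^ 2 = a ^ 2 + d ^ 2 - 2 * a * d * tq)
    (hq2 : q ^ 2 = b ^ 2 + c ^ 2 - 2 * b * c * (-tq)) :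
    (d3 b c q + 8 * (b * c * q)) * (d3 p c d + 8 * (p * c * d)) * (d3 a q d + 8 * (a * q * d)) *
        (d3 a b p + 8 * (a * b * p)) ≤
      (64 * (a * p * d * b * q * c) +
        (a * ((p + d) ^ 2 - c ^ 2) * d3 b q c + p * ((a + d) ^ 2 - q ^ 2) * d3 b c q +
          d * ((a + p) ^ 2 - b ^ 2) * d3 q c b +
        (a * ((b + q) ^ 2 - c ^ 2) * d3 p d c + b * ((a + q) ^ 2 - d ^ 2) * d3 p c d +
          q * ((a + b) ^ 2 - p ^ 2) * d3 d c p) +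
        (p * ((b + c) ^ 2 - q ^ 2) * d3 a d q + b * ((p + c) ^ 2 - d ^ 2) * d3 a q d +
          c * ((p + b) ^ 2 - a ^ 2) * d3 d q a) +
        (d * ((q + c) ^ 2 - b ^ 2) * d3 a p b + q * ((d + c) ^ 2 - p ^ 2) * d3 a b p +
          c * ((d + q) ^ 2 - a ^ 2) * d3 p b a))) ^ 2 := by
  obtain ⟨⟨t1, t2, t3⟩, ⟨t4, t5, t6⟩, ⟨t7, t8, t9⟩, t10, t11, t12⟩ := tri
  -- The triangles omitting the vertices `0, 1, 2, 3`, in this order.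
  have e0 : d3 b c q = b * c * q * (2 * (tb + tc + -tq - 1)) :=
    d3_eq_cos (by linarith) (by linarith) (by linarith)
  have e1 : d3 p c d = p * c * d * (2 * (-tp + tc + td - 1)) :=
    d3_eq_cos (by linarith) (by linarith) (by linarith)
  have e2 : d3 a q d = a * q * d * (2 * (ta + tq + td - 1)) :=
    d3_eq_cos (by linarith) (by linarith) (by linarith)
  have e3 : d3 a b p = a * b * p * (2 * (ta + tb + tp - 1)) :=
    d3_eq_cos (by linarith) (by linarith) (by linarith)
  have n0 := nonneg_of_d3 hb hc hq e0 t4 t5 t6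
  have n1 := nonneg_of_d3 hp hc hd e1 t7 t8 t9
  have n2 := nonneg_of_d3 ha hq hd e2 t10 t11 t12
  have n3 := nonneg_of_d3 ha hb hp e3 t1 t2 t3
  have k0 := neg_one_le_cos ha hd hq hq0 t11
  have k1 := neg_one_le_cos ha hb hp hp1 t1
  have k2 := neg_one_le_cos hb hc hq hq2 t4
  have k3 := neg_one_le_cos hc hd hp hp3 t9
  have key := final_ineq _ _ _ _ (3 + tb + tc + tq) (3 + tc + td + tp) (3 + ta + td - tq)
    (3 + ta + tb - tp) n0 n1 n2 n3 (by linarith) (by linarith) (by linarith) (by linarith)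
  rw [term_eq (e := a) (t := tc) (ρ := 2 * (tb + tc + -tq - 1)) (by linarith)
      (by rw [d3_swap' b q c, e0]; ring),
    term_eq (e := p) (t := tq) (ρ := 2 * (tb + tc + -tq - 1)) (by linarith) e0,
    term_eq (e := d) (t := tb) (ρ := 2 * (tb + tc + -tq - 1)) (by linarith)
      (by rw [d3_rev q c b, e0]; ring),
    term_eq (e := a) (t := tc) (ρ := 2 * (-tp + tc + td - 1)) (by linarith)
      (by rw [d3_swap' p d c, e1]; ring),
    term_eq (e := b) (t := td) (ρ := 2 * (-tp + tc + td - 1)) (by linarith) e1,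
    term_eq (e := q) (t := tp) (ρ := 2 * (-tp + tc + td - 1)) (by linarith)
      (by rw [d3_rev d c p, e1]; ring),
    term_eq (e := p) (t := -tq) (ρ := 2 * (ta + tq + td - 1)) (by linarith)
      (by rw [d3_swap' a d q, e2]; ring),
    term_eq (e := b) (t := td) (ρ := 2 * (ta + tq + td - 1)) (by linarith) e2,
    term_eq (e := c) (t := ta) (ρ := 2 * (ta + tq + td - 1)) (by linarith)
      (by rw [d3_rev d q a, e2]; ring),
    term_eq (e := d) (t := tb) (ρ := 2 * (ta + tb + tp - 1)) (by linarith)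
      (by rw [d3_swap' a p b, e3]; ring),
    term_eq (e := q) (t := -tp) (ρ := 2 * (ta + tb + tp - 1)) (by linarith) e3,
    term_eq (e := c) (t := ta) (ρ := 2 * (ta + tb + tp - 1)) (by linarith)
      (by rw [d3_rev p b a, e3]; ring), e0, e1, e2, e3]
  have hprod : 0 ≤ (a * b * c * d * p * q) ^ 2 := sq_nonneg _
  have := mul_le_mul_of_nonneg_left key hprod
  refine le_trans (le_of_eq ?_) (this.trans (le_of_eq ?_))
  · ring
  · ring

/-! ### Geometry of the crossing diagonals -/

/-- The similar triangles cut out by the diagonals. The intersection point of the diagonals has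
distances `U, V, lam * V, lam * U` to `x 0, x 1, x 2, x 3` (power of a point), and `k` is the cosine
of the angle between the diagonals opposite the side `x 0 x 1`. The triangles on `x 0 x 1` and
`x 3 x 2` are similar with ratio `lam`, those on `x 1 x 2` and `x 0 x 3` with ratio `U / V`. -/
lemma exists_crossing_param (x : Fin 4 → EuclideanSpace ℝ (Fin 2))
    (hne : ∀ i j : Fin 4, i ≠ j → x i ≠ x j)
    (O : EuclideanSpace ℝ (Fin 2)) (R : ℝ) (hR : ∀ i, dist (x i) O = R)
    (hcyc : (segment ℝ (x 0) (x 2) ∩ segment ℝ (x 1) (x 3)).Nonempty) :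
    ∃ U V lam k e : ℝ, 0 < U ∧ 0 < V ∧ 0 < lam ∧ 0 < e ∧
      dist (x 0) (x 1) ^ 2 = U ^ 2 + V ^ 2 - 2 * U * V * k ∧
      e ^ 2 = lam ^ 2 + 1 + 2 * lam * k ∧
      dist (x 1) (x 2) = V * e ∧ dist (x 0) (x 3) = U * e ∧
      dist (x 2) (x 3) = lam * dist (x 0) (x 1) ∧
      dist (x 0) (x 2) = U + lam * V ∧ dist (x 1) (x 3) = V + lam * U := by
  obtain ⟨P, ⟨f, g, hf, hg, hfg, hP⟩, f', g', hf', hg', hfg', hP'⟩ := hcyc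
  have pos : ∀ i j : Fin 4, i ≠ j → 0 < dist (x i) (x j) := fun i j h => dist_pos.2 (hne i j h)
  have p01 := pos 0 1 (by decide)
  have p12 := pos 1 2 (by decide)
  have p23 := pos 2 3 (by decide)
  have p03 := pos 0 3 (by decide)
  have p02 := pos 0 2 (by decide)
  have p13 := pos 1 3 (by decide)
  obtain ⟨y, hy⟩ : ∃ y, y = x 2 - x 0 := ⟨_, rfl⟩
  obtain ⟨z, hz⟩ : ∃ z, z = x 3 - x 1 := ⟨_, rfl⟩
  obtain ⟨w, hw⟩ : ∃ w, w = P - O := ⟨_, rfl⟩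
  obtain rfl : f = 1 - g := by linarith
  obtain rfl : f' = 1 - g' := by linarith
  have h0 : x 0 = P - g • y := by rw [hy, ← hP]; module
  have h2 : x 2 = P + (1 - g) • y := by rw [hy, ← hP]; module
  have h1 : x 1 = P - g' • z := by rw [hz, ← hP']; module
  have h3 : x 3 = P + (1 - g') • z := by rw [hz, ← hP']; module
  have exp : ∀ (s t : ℝ) (u v : EuclideanSpace ℝ (Fin 2)),
      ‖s • u + t • v‖ ^ 2 = s ^ 2 * ‖u‖ ^ 2 + 2 * s * t * inner ℝ u v + t ^ 2 * ‖v‖ ^ 2 := by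
    intro s t u v
    rw [norm_add_sq_real, inner_smul_left, inner_smul_right, norm_smul, norm_smul, mul_pow,
      mul_pow, Real.norm_eq_abs, Real.norm_eq_abs, sq_abs, sq_abs]
    simp only [conj_trivial]
    ring
  have d02 : dist (x 0) (x 2) = ‖y‖ := by rw [dist_comm, dist_eq_norm, hy]
  have d13 : dist (x 1) (x 3) = ‖z‖ := by rw [dist_comm, dist_eq_norm, hz]
  have d01 := exp (-g) g' y z
  rw [show (-g) • y + g' • z = x 0 - x 1 by rw [h0, h1]; module, ← dist_eq_norm] at d01
  have d12 := exp (1 - g) g' y z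
  rw [show (1 - g) • y + g' • z = x 2 - x 1 by rw [h2, h1]; module, ← dist_eq_norm, dist_comm] at d12
  have d23 := exp (1 - g) (-(1 - g')) y z
  rw [show (1 - g) • y + (-(1 - g')) • z = x 2 - x 3 by rw [h2, h3]; module, ← dist_eq_norm] at d23
  have d03 := exp (-g) (-(1 - g')) y z
  rw [show (-g) • y + (-(1 - g')) • z = x 0 - x 3 by rw [h0, h3]; module, ← dist_eq_norm] at d03
  have R0 := exp 1 (-g) w y
  rw [show (1 : ℝ) • w + (-g) • y = x 0 - O by rw [h0, hw]; module, ← dist_eq_norm,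
    hR 0] at R0
  have R2 := exp 1 (1 - g) w y
  rw [show (1 : ℝ) • w + (1 - g) • y = x 2 - O by rw [h2, hw]; module, ← dist_eq_norm,
    hR 2] at R2
  have R1 := exp 1 (-g') w z
  rw [show (1 : ℝ) • w + (-g') • z = x 1 - O by rw [h1, hw]; module, ← dist_eq_norm,
    hR 1] at R1
  have R3 := exp 1 (1 - g') w z
  rw [show (1 : ℝ) • w + (1 - g') • z = x 3 - O by rw [h3, hw]; module, ← dist_eq_norm,
    hR 3] at R3
  -- Both sides are the power of `P` with respect to the circle, up to sign.
  have power : g * (1 - g) * ‖y‖ ^ 2 = g' * (1 - g') * ‖z‖ ^ 2 := by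
    linear_combination (1 - g') * R1 + g' * R3 - (1 - g) * R0 - g * R2
  rw [d02] at p02
  rw [d13] at p13
  -- If `P` were an endpoint of one diagonal, its power would vanish, so `P` would be an endpoint
  -- of the other diagonal too, and two of the points would coincide.
  have nondeg : g * (1 - g) ≠ 0 ∧ g' * (1 - g') ≠ 0 := by
    by_contra hcon
    have hA : g * (1 - g) = 0 ∧ g' * (1 - g') = 0 := by
      have hy2 : ‖y‖ ^ 2 ≠ 0 := by positivity
      have hz2 : ‖z‖ ^ 2 ≠ 0 := by positivity
      by_cases h : g * (1 - g) = 0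
      · refine ⟨h, ?_⟩
        rw [h, zero_mul] at power
        exact (mul_eq_zero.1 power.symm).resolve_right hz2
      · have h' : g' * (1 - g') = 0 := by
          by_contra h'
          exact hcon ⟨h, h'⟩
        rw [h', zero_mul] at power
        exact absurd ((mul_eq_zero.1 power).resolve_right hy2) h
    rcases mul_eq_zero.1 hA.1 with hh | hh <;> rcases mul_eq_zero.1 hA.2 with hh' | hh'
    · exact hne 0 1 (by decide) (by rw [h0, h1, hh, hh']; module)
    · exact hne 0 3 (by decide) (by rw [h0, h3, hh, hh']; module)
    · exact hne 2 1 (by decide) (by rw [h2, h1, hh, hh']; module)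
    · exact hne 2 3 (by decide) (by rw [h2, h3, hh, hh']; module)
  have g0 : 0 < g := lt_of_le_of_ne hg (Ne.symm (left_ne_zero_of_mul nondeg.1))
  have g1 : 0 < 1 - g := lt_of_le_of_ne hf (Ne.symm (right_ne_zero_of_mul nondeg.1))
  have g0' : 0 < g' := lt_of_le_of_ne hg' (Ne.symm (left_ne_zero_of_mul nondeg.2))
  have hV : 0 < g' * ‖z‖ := by positivity
  have hU : 0 < g * ‖y‖ := by positivity
  obtain ⟨lam, hlam⟩ : ∃ lam, lam = (1 - g) * ‖y‖ / (g' * ‖z‖) := ⟨_, rfl⟩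
  have hl0 : 0 < lam := by rw [hlam]; positivity
  have hl1 : lam * (g' * ‖z‖) = (1 - g) * ‖y‖ := by rw [hlam]; field_simp
  have hl2 : lam * (g * ‖y‖) = (1 - g') * ‖z‖ := by
    have : (lam * (g * ‖y‖)) * (g' * ‖z‖) = ((1 - g') * ‖z‖) * (g' * ‖z‖) := by
      linear_combination g * ‖y‖ * hl1 + power
    exact mul_right_cancel₀ hV.ne' this
  obtain ⟨k, hk⟩ : ∃ k, k = inner ℝ y z / (‖y‖ * ‖z‖) := ⟨_, rfl⟩
  have hk' : inner ℝ y z = ‖y‖ * ‖z‖ * k := by rw [hk]; field_simp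
  rw [hk'] at d01 d12 d23 d03
  obtain ⟨e, he⟩ : ∃ e, e = dist (x 1) (x 2) / (g' * ‖z‖) := ⟨_, rfl⟩
  have he0 : 0 < e := by rw [he]; positivity
  have he1 : dist (x 1) (x 2) = g' * ‖z‖ * e := by rw [he]; field_simp
  have he2 : e ^ 2 = lam ^ 2 + 1 + 2 * lam * k := by
    have : e ^ 2 * (g' * ‖z‖) ^ 2 = (lam ^ 2 + 1 + 2 * lam * k) * (g' * ‖z‖) ^ 2 := by
      rw [he1] at d12
      linear_combination d12 -
        (lam * (g' * ‖z‖) + (1 - g) * ‖y‖ + 2 * k * (g' * ‖z‖)) * hl1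
    exact mul_right_cancel₀ (by positivity) this
  refine ⟨g * ‖y‖, g' * ‖z‖, lam, k, e, hU, hV, hl0, he0, ?_, he2, he1, ?_, ?_, ?_, ?_⟩
  · linear_combination d01
  · refine (sq_eq_sq₀ p03.le (by positivity)).1 ?_
    rw [d03, mul_pow, he2]
    linear_combination (-(lam * (g * ‖y‖) + (1 - g') * ‖z‖ + 2 * k * (g * ‖y‖))) * hl2
  · refine (sq_eq_sq₀ p23.le (by positivity)).1 ?_
    rw [d23, mul_pow, d01]
    linear_combination (-(lam * (g' * ‖z‖) + (1 - g) * ‖y‖) +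
      2 * k * ((1 - g') * ‖z‖)) * hl1 +
      (-(lam * (g * ‖y‖) + (1 - g') * ‖z‖) + 2 * k * lam * (g' * ‖z‖)) * hl2
  · rw [d02, hl1]; ring
  · rw [d13, hl2]; ring

/-- The third Atiyah–Sutcliffe conjecture for the vertices of an inscribed quadrilateral:
for four distinct concyclic points `x 0, x 1, x 2, x 3` listed in cyclic order around the
circle (equivalently, the diagonals meet),
`(64·∏_{i<j} r_{i,j} + (1/2)·∑_{σ ∈ S₄} r_{σ1,σ4}·((r_{σ2,σ4}+r_{σ3,σ4})² - r_{σ2,σ3}²)·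
  d₃(r_{σ1,σ2}, r_{σ1,σ3}, r_{σ2,σ3}))² ≥ ∏_{l=1}^4 (d₃(r_{i,j}, r_{j,k}, r_{i,k}) + 8·r_{i,j}·r_{j,k}·r_{i,k})`. -/
theorem inscribed_quad_atiyah_sutcliffe_three (x : Fin 4 → EuclideanSpace ℝ (Fin 2))
    (hne : ∀ i j : Fin 4, i ≠ j → x i ≠ x j)
    (O : EuclideanSpace ℝ (Fin 2)) (R : ℝ) (hR : ∀ i, dist (x i) O = R)
    (hcyc : (segment ℝ (x 0) (x 2) ∩ segment ℝ (x 1) (x 3)).Nonempty) :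
    (64 * (dist (x 0) (x 1) * dist (x 0) (x 2) * dist (x 0) (x 3) * dist (x 1) (x 2) *
          dist (x 1) (x 3) * dist (x 2) (x 3)) +
        (1 / 2) * ∑ σ : Equiv.Perm (Fin 4),
          dist (x (σ 0)) (x (σ 3)) *
            ((dist (x (σ 1)) (x (σ 3)) + dist (x (σ 2)) (x (σ 3))) ^ 2 -
              dist (x (σ 1)) (x (σ 2)) ^ 2) *
            d3 (dist (x (σ 0)) (x (σ 1))) (dist (x (σ 0)) (x (σ 2)))
              (dist (x (σ 1)) (x (σ 2)))) ^ 2 ≥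
      (d3 (dist (x 1) (x 2)) (dist (x 2) (x 3)) (dist (x 1) (x 3)) +
          8 * (dist (x 1) (x 2) * dist (x 2) (x 3) * dist (x 1) (x 3))) *
        (d3 (dist (x 0) (x 2)) (dist (x 2) (x 3)) (dist (x 0) (x 3)) +
          8 * (dist (x 0) (x 2) * dist (x 2) (x 3) * dist (x 0) (x 3))) *
        (d3 (dist (x 0) (x 1)) (dist (x 1) (x 3)) (dist (x 0) (x 3)) +
          8 * (dist (x 0) (x 1) * dist (x 1) (x 3) * dist (x 0) (x 3))) *
        (d3 (dist (x 0) (x 1)) (dist (x 1) (x 2)) (dist (x 0) (x 2)) +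
          8 * (dist (x 0) (x 1) * dist (x 1) (x 2) * dist (x 0) (x 2))) := by
  obtain ⟨U, V, lam, k, e, hU, hV, hl, he, ea, ee, eb, ed, ec, ep, eq⟩ :=
    exists_crossing_param x hne O R hR hcyc
  have pos : ∀ i j : Fin 4, i ≠ j → 0 < dist (x i) (x j) := fun i j h => dist_pos.2 (hne i j h)
  have p01 := pos 0 1 (by decide)
  have p12 := pos 1 2 (by decide)
  have p23 := pos 2 3 (by decide)
  have p03 := pos 0 3 (by decide)
  have p02 := pos 0 2 (by decide)
  have p13 := pos 1 3 (by decide)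
  have c10 := dist_comm (x 1) (x 0)
  have c20 := dist_comm (x 2) (x 0)
  have c30 := dist_comm (x 3) (x 0)
  have c21 := dist_comm (x 2) (x 1)
  have c31 := dist_comm (x 3) (x 1)
  have c32 := dist_comm (x 3) (x 2)
  have T := fun i j k : Fin 4 => dist_triangle (x i) (x j) (x k)
  have tri : (dist (x 0) (x 2) ≤ dist (x 0) (x 1) + dist (x 1) (x 2) ∧
        dist (x 1) (x 2) ≤ dist (x 0) (x 1) + dist (x 0) (x 2) ∧
        dist (x 0) (x 1) ≤ dist (x 1) (x 2) + dist (x 0) (x 2)) ∧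
      (dist (x 1) (x 3) ≤ dist (x 1) (x 2) + dist (x 2) (x 3) ∧
        dist (x 2) (x 3) ≤ dist (x 1) (x 2) + dist (x 1) (x 3) ∧
        dist (x 1) (x 2) ≤ dist (x 2) (x 3) + dist (x 1) (x 3)) ∧
      (dist (x 0) (x 3) ≤ dist (x 0) (x 2) + dist (x 2) (x 3) ∧
        dist (x 2) (x 3) ≤ dist (x 0) (x 2) + dist (x 0) (x 3) ∧
        dist (x 0) (x 2) ≤ dist (x 2) (x 3) + dist (x 0) (x 3)) ∧
      (dist (x 0) (x 3) ≤ dist (x 0) (x 1) + dist (x 1) (x 3) ∧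
        dist (x 1) (x 3) ≤ dist (x 0) (x 1) + dist (x 0) (x 3) ∧
        dist (x 0) (x 1) ≤ dist (x 1) (x 3) + dist (x 0) (x 3)) := by
    refine ⟨⟨?_, ?_, ?_⟩, ⟨?_, ?_, ?_⟩, ⟨?_, ?_, ?_⟩, ?_, ?_, ?_⟩
    · exact T 0 1 2
    · linarith [T 1 0 2]
    · linarith [T 0 2 1]
    · exact T 1 2 3
    · linarith [T 2 1 3]
    · linarith [T 1 3 2]
    · exact T 0 2 3
    · linarith [T 2 0 3]
    · linarith [T 0 3 2]
    · exact T 0 1 3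
    · linarith [T 1 0 3]
    · linarith [T 0 3 1]
  rw [sum_perm_four_s17 fun i j k l => dist (x i) (x l) *
    ((dist (x j) (x l) + dist (x k) (x l)) ^ 2 - dist (x j) (x k) ^ 2) *
    d3 (dist (x i) (x j)) (dist (x i) (x k)) (dist (x j) (x k))]
  rotate_left
  · intro i j k l
    rw [d3_swap, dist_comm (x j) (x k)]
    ring
  simp only [c10, c20, c30, c21, c31, c32]
  clear T pos
  generalize dist (x 0) (x 1) = a at *
  generalize dist (x 1) (x 2) = b at *
  generalize dist (x 2) (x 3) = c at *
  generalize dist (x 0) (x 3) = d at *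
  generalize dist (x 0) (x 2) = p at *
  generalize dist (x 1) (x 3) = q at *
  -- `ta, tb, tc, td` are read off in the four triangles cut out by the diagonals.
  have key := ineq_of_cosines (ta := (lam + k) / e) (tb := (U - V * k) / a)
    (tc := (1 + lam * k) / e) (td := (V - U * k) / a)
    (tp := (a ^ 2 + b ^ 2 - p ^ 2) / (2 * a * b)) (tq := (a ^ 2 + d ^ 2 - q ^ 2) / (2 * a * d))
    p01 p12 p23 p03 p02 p13 tri ?_ ?_ ?_ ?_ ?_ ?_ ?_ ?_ ?_ ?_ ?_ ?_
  · refine ge_iff_le.2 (key.trans (le_of_eq ?_))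
    ring
  all_goals subst eb ed ec ep eq
  all_goals field_simp
  all_goals (rw [ea, ee]; ring)
end
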